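/- arXiv:2009.00925 — 2 statements merged into one kernel-verified Lean document; each statement's English description precedes it below -/
import Mathlib

section
/- A circle map f : 𝕊 → 𝕊 is topological null if and only if for every open cover 𝒰 of 𝕊 the maximal pattern complexity function p*_{𝕊,𝒰} is of polynomial order. -/
/-!
Why the theorem holds.

Polynomial order gives nullity because `log (C * n ^ C) / n` tends to `0`
(`IsNull.of_polyOrder`).

For the converse let `f` be null. Independence sets for a pair of disjoint closed sets `A, B`
then have bounded size (`IsNull.bounded_indep`): otherwise longer and longer independence sets can
be spliced into one sequence along which the cover `{Aᶜ, Bᶜ}` has positive sequence entropy.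

The circle enters only through the property `ThickConnected`: for every `ε`, finitely many sets
with nonempty interior suffice for each connected set of diameter exceeding `ε` to contain one of
them. If every nonempty open subset of some open set were spread beyond `ε` by an iterate, such
subsets would all be mapped over members of this finite family, which produces a horseshoe and
hence arbitrarily large independence sets (`indep_of_horseshoe`). So in a null system the open
sets all of whose iterates have diameter at most `ε` have dense union
(`IsNull.not_sensitive`). The complement of this union is compact and totally disconnected, which
splits the space into finitely many disjoint closed pieces, each inside an element of the given
cover, and finitely many sets all of whose iterates are inside elements of the cover
(`IsNull.exists_decomposition`).

The itinerary of a point along a set `T` of `n` times is then determined, up to elements of the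
cover, by the visits to the closed pieces before the orbit first leaves them, and by the stable
sets it is in at that moment. Each visit word is a subset of `T`, and a family of visit words
shattering `J` makes `J` minus its maximum an independence set for a piece and the union of the
other pieces. Shattered sets therefore have bounded size, and the Sauer–Shelah lemma bounds the
number of visit words by a polynomial in `n` (`card_visitWords_le`, `IsNull.polyOrder`).
-/

open Set Filter Topology ENNReal

noncomputable section

/-- The circle `𝕊 = ℝ / ℤ`, identified with `{z ∈ ℂ : |z| = 1}` via `x ↦ exp(2πix)`. -/
abbrev Circle1 : Type := AddCircle (1 : ℝ)

/-- The natural projection `e : ℝ → 𝕊`, `e(x) = exp(2πix)`. -/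
def projS : ℝ → Circle1 := fun x => (x : Circle1)

/-- `𝒰` is an open cover of `X`. -/
def IsOpenCover {X : Type*} [TopologicalSpace X] (U : Set (Set X)) : Prop :=
  (∀ A ∈ U, IsOpen A) ∧ ⋃₀ U = univ

/-- `N(𝒰)`: the minimal cardinality of a subcover of `𝒰`. -/
def coverN {X : Type*} (U : Set (Set X)) : ℕ :=
  sInf {n | ∃ V : Finset (Set X), ↑V ⊆ U ∧ ⋃₀ (V : Set (Set X)) = univ ∧ V.card = n}

/-- The join `⋁_{i} f^{-t i} 𝒰` of preimages of a cover along a finite sequence of times. -/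
def timeJoin {X : Type*} (f : X → X) (U : Set (Set X)) {n : ℕ} (t : Fin n → ℕ) :
    Set (Set X) :=
  {A | ∃ u : Fin n → Set X, (∀ i, u i ∈ U) ∧ A = ⋂ i, f^[t i] ⁻¹' u i}

/-- Topological entropy of `f` with respect to the cover `𝒰`:
`lim (1/n) log N(⋁_{i=1}^n f^{-i} 𝒰)`. -/
def coverEnt {X : Type*} (f : X → X) (U : Set (Set X)) : ℝ≥0∞ :=
  Filter.limsup
    (fun n : ℕ =>
      ENNReal.ofReal (Real.log (coverN (timeJoin f U (fun i : Fin n => (i : ℕ) + 1))) / n))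
    Filter.atTop

/-- Topological entropy `h_top(f)`. -/
def topEnt {X : Type*} [TopologicalSpace X] (f : X → X) : ℝ≥0∞ :=
  ⨆ U ∈ {U : Set (Set X) | IsOpenCover U}, coverEnt f U

/-- Topological sequence entropy of `f` along the sequence `a` with respect to the cover `𝒰`. -/
def seqEnt {X : Type*} (f : X → X) (a : ℕ → ℕ) (U : Set (Set X)) : ℝ≥0∞ :=
  Filter.limsup
    (fun n : ℕ =>
      ENNReal.ofReal (Real.log (coverN (timeJoin f U (fun i : Fin n => a (i : ℕ)))) / n))
    Filter.atTop

/-- `(X,f)` is topological null: the sequence entropy along every increasing sequence of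
positive integers vanishes. -/
def IsNull {X : Type*} [TopologicalSpace X] (f : X → X) : Prop :=
  ∀ a : ℕ → ℕ, StrictMono a → (∀ n, 0 < a n) →
    ∀ U : Set (Set X), IsOpenCover U → seqEnt f a U = 0

/-- The maximal pattern complexity `p*_{X,𝒰}(n)`. -/
def patternComp {X : Type*} (f : X → X) (U : Set (Set X)) (n : ℕ) : ℕ :=
  sSup {m | ∃ t : Fin n → ℕ, m = coverN (timeJoin f U t)}

/-- A function `q : ℕ → ℕ` is of polynomial order: `q(n) ≤ C n^C` for some constant `C > 0`. -/
def PolyOrder (q : ℕ → ℕ) : Prop :=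
  ∃ C : ℝ, 0 < C ∧ ∀ n : ℕ, 1 ≤ n → (q n : ℝ) ≤ C * (n : ℝ) ^ C

/-- The ω-limit set `ω(x,f) = ⋂_n closure {f^i(x) : i ≥ n}`. -/
def omegaSet {X : Type*} [TopologicalSpace X] (f : X → X) (x : X) : Set X :=
  ⋂ n : ℕ, closure {y | ∃ i, n ≤ i ∧ f^[i] x = y}

/-- `I` is an independence set for the pair of sets `{U, V}`. -/
def IsIndepSet {X : Type*} (f : X → X) (U V : Set X) (I : Set ℕ) : Prop :=
  ∀ J : Finset ℕ, ↑J ⊆ I → J.Nonempty →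
    ∀ S : ℕ → Bool, (⋂ i ∈ J, f^[i] ⁻¹' (if S i then U else V)).Nonempty

/-- `⟨x,y⟩` is an IN-pair: every pair of neighborhoods has arbitrarily large finite
independence sets. -/
def IsINPair {X : Type*} [TopologicalSpace X] (f : X → X) (x y : X) : Prop :=
  ∀ U ∈ nhds x, ∀ V ∈ nhds y, ∀ m : ℕ, ∃ J : Finset ℕ, m ≤ J.card ∧ IsIndepSet f U V ↑J

/-- `⟨x,y⟩` is an IT-pair: every pair of neighborhoods has an infinite independence set. -/
def IsITPair {X : Type*} [TopologicalSpace X] (f : X → X) (x y : X) : Prop :=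
  ∀ U ∈ nhds x, ∀ V ∈ nhds y, ∃ I : Set ℕ, I.Infinite ∧ IsIndepSet f U V I

/-- A closed nondegenerate proper subinterval (arc) of the circle. -/
def IsClosedArc (J : Set Circle1) : Prop :=
  ∃ c d : ℝ, c < d ∧ d - c < 1 ∧ J = projS '' Icc c d

/-- A closed nondegenerate subinterval of a linearly ordered space. -/
def IsClosedSubInt {X : Type*} [Preorder X] (J : Set X) : Prop :=
  ∃ c d : X, c < d ∧ J = Icc c d

/-- `J, f(J), …, f^{n-1}(J)` are pairwise disjoint and `f^n(J) = J`. -/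
def IsPeriodicSet {X : Type*} (f : X → X) (J : Set X) (n : ℕ) : Prop :=
  0 < n ∧ (∀ i j, i < j → j < n → Disjoint (f^[i] '' J) (f^[j] '' J)) ∧ f^[n] '' J = J

/-- `⟨x,y⟩` is a separable pair: `x` and `y` lie in two disjoint periodic intervals
(`isInt` is the notion of closed nondegenerate subinterval of the phase space). -/
def SeparablePair {X : Type*} (isInt : Set X → Prop) (f : X → X) (x y : X) : Prop :=
  ∃ J₁ J₂ : Set X, ∃ n₁ n₂ : ℕ,
    isInt J₁ ∧ IsPeriodicSet f J₁ n₁ ∧ isInt J₂ ∧ IsPeriodicSet f J₂ n₂ ∧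
    Disjoint J₁ J₂ ∧ x ∈ J₁ ∧ y ∈ J₂

/-- `⟨x,y⟩` is a non-separable pair. -/
def NonSeparablePair {X : Type*} [TopologicalSpace X] (isInt : Set X → Prop)
    (f : X → X) (x y : X) : Prop :=
  x ≠ y ∧ (∃ z, x ∈ omegaSet f z ∧ y ∈ omegaSet f z) ∧ ¬ SeparablePair isInt f x y

/-- `F` is a lifting of the circle map `f`. -/
def IsLift (f : Circle1 → Circle1) (F : ℝ → ℝ) : Prop :=
  Continuous F ∧ ∀ x : ℝ, projS (F x) = f (projS x)

/-- `Per(f) ≠ ∅`. -/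
def HasPeriodicPt {X : Type*} (f : X → X) : Prop :=
  ∃ y, ∃ q : ℕ, 0 < q ∧ f^[q] y = y

/-- `E` is an `(A,n,ε)`-spanning set. -/
def IsSpanningSet {X : Type*} [PseudoMetricSpace X] (f : X → X) (a : ℕ → ℕ) (n : ℕ)
    (ε : ℝ) (E : Set X) : Prop :=
  ∀ x : X, ∃ y ∈ E, ∀ i : Fin n, dist (f^[a (i : ℕ)] x) (f^[a (i : ℕ)] y) < ε

/-- `r_A(n,ε)`: minimal cardinality of an `(A,n,ε)`-spanning set. -/
def spanNum {X : Type*} [PseudoMetricSpace X] (f : X → X) (a : ℕ → ℕ) (n : ℕ) (ε : ℝ) : ℕ :=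
  sInf {m | ∃ E : Finset X, IsSpanningSet f a n ε ↑E ∧ E.card = m}

/-- `r*(n,ε) = sup_A r_A(n,ε)` over all increasing sequences `A`. -/
def rStar {X : Type*} [PseudoMetricSpace X] (f : X → X) (n : ℕ) (ε : ℝ) : ℕ :=
  sSup {m | ∃ a : ℕ → ℕ, StrictMono a ∧ m = spanNum f a n ε}

/-- `E` is an `(A,n,ε)`-separated set. -/
def IsSeparatedSet {X : Type*} [PseudoMetricSpace X] (f : X → X) (a : ℕ → ℕ) (n : ℕ)
    (ε : ℝ) (E : Set X) : Prop :=
  ∀ x ∈ E, ∀ y ∈ E, x ≠ y → ∃ i : Fin n, ε ≤ dist (f^[a (i : ℕ)] x) (f^[a (i : ℕ)] y)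

/-- `s_A(n,ε)`: maximal cardinality of an `(A,n,ε)`-separated set. -/
def sepNum {X : Type*} [PseudoMetricSpace X] (f : X → X) (a : ℕ → ℕ) (n : ℕ) (ε : ℝ) : ℕ :=
  sSup {m | ∃ E : Finset X, IsSeparatedSet f a n ε ↑E ∧ E.card = m}

/-- `s*(n,ε) = sup_A s_A(n,ε)` over all increasing sequences `A`. -/
def sStar {X : Type*} [PseudoMetricSpace X] (f : X → X) (n : ℕ) (ε : ℝ) : ℕ :=
  sSup {m | ∃ a : ℕ → ℕ, StrictMono a ∧ m = sepNum f a n ε}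

/-! ### Independence sets and sequence entropy -/

lemma exists_finset_join {X : Type*} (f : X → X) {U : Set (Set X)} (V : Finset (Set X))
    (hV : (V : Set (Set X)) ⊆ U) (hc : ⋃₀ (V : Set (Set X)) = univ) {n : ℕ} (t : Fin n → ℕ) :
    ∃ W : Finset (Set X), (W : Set (Set X)) ⊆ timeJoin f U t ∧
      ⋃₀ (W : Set (Set X)) = univ ∧ W.card ≤ V.card ^ n := by
  classical
  refine ⟨(Fintype.piFinset (fun _ : Fin n => V)).image (fun u => ⋂ i, f^[t i] ⁻¹' u i),
    ?_, ?_, ?_⟩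
  · intro A hA
    simp only [Finset.coe_image, mem_image, Finset.mem_coe, Fintype.mem_piFinset] at hA
    obtain ⟨u, hu, rfl⟩ := hA
    exact ⟨u, fun i => hV (hu i), rfl⟩
  · rw [eq_univ_iff_forall] at hc ⊢
    intro x
    choose u hu hxu using fun i : Fin n => hc (f^[t i] x)
    refine ⟨⋂ i, f^[t i] ⁻¹' u i, ?_, mem_iInter.2 hxu⟩
    simp only [Finset.coe_image, mem_image, Finset.mem_coe, Fintype.mem_piFinset]
    exact ⟨u, hu, rfl⟩
  · refine Finset.card_image_le.trans ?_
    simp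

lemma coverN_le {X : Type*} {U : Set (Set X)} (V : Finset (Set X))
    (hV : (V : Set (Set X)) ⊆ U) (hc : ⋃₀ (V : Set (Set X)) = univ) : coverN U ≤ V.card :=
  Nat.sInf_le ⟨V, hV, hc, rfl⟩

/-- Over an independence set `J` for disjoint `A, B`, the `2 ^ |J|` patterns lie in distinct
elements of any subcover of the join of `{Aᶜ, Bᶜ}`. -/
lemma two_pow_le_coverN {X : Type*} (f : X → X) {A B : Set X} (hAB : Disjoint A B) {n : ℕ}
    (t : Fin n → ℕ) (J : Finset ℕ) (hne : J.Nonempty) (hJ : IsIndepSet f A B ↑J)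
    (hJt : ∀ s ∈ J, ∃ i, t i = s) :
    2 ^ J.card ≤ coverN (timeJoin f {Aᶜ, Bᶜ} t) := by
  classical
  have hc : ⋃₀ (({Aᶜ, Bᶜ} : Finset (Set X)) : Set (Set X)) = univ := by
    rw [eq_univ_iff_forall]
    intro x
    by_cases hx : x ∈ A
    · exact ⟨Bᶜ, by simp, fun hb => hAB.le_bot ⟨hx, hb⟩⟩
    · exact ⟨Aᶜ, by simp, hx⟩
  obtain ⟨W, hW1, hW2, -⟩ := exists_finset_join f (U := {Aᶜ, Bᶜ}) {Aᶜ, Bᶜ} (by simp) hc t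
  obtain ⟨V, hV1, hV2, hV3⟩ := Nat.sInf_mem (s := {n | ∃ V : Finset (Set X),
    ↑V ⊆ timeJoin f {Aᶜ, Bᶜ} t ∧ ⋃₀ (V : Set (Set X)) = univ ∧ V.card = n}) ⟨_, W, hW1, hW2, rfl⟩
  change V.card = coverN _ at hV3
  rw [← hV3, ← Finset.card_powerset]
  have hx : ∀ S : Finset ℕ, ∃ x, ∀ s ∈ J, (s ∈ S → f^[s] x ∈ A) ∧ (s ∉ S → f^[s] x ∈ B) := by
    intro S
    obtain ⟨x, hx⟩ := hJ J subset_rfl hne (fun i => decide (i ∈ S))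
    refine ⟨x, fun s hs => ?_⟩
    have := mem_iInter₂.1 hx s hs
    constructor <;> intro h <;> simpa [h] using this
  choose x hx using hx
  have hv : ∀ S, ∃ v ∈ V, x S ∈ v := fun S => by
    have := (eq_univ_iff_forall.1 hV2) (x S)
    simpa using this
  choose v hvV hxv using hv
  have key : ∀ S S' : Finset ℕ, v S = v S' → ∀ s ∈ J, s ∈ S → s ∈ S' := by
    intro S S' h s hs hS
    by_contra hS'
    obtain ⟨u, hu, huv⟩ := hV1 (hvV S)
    obtain ⟨i, rfl⟩ := hJt s hs
    have h1 : f^[t i] (x S) ∈ u i := by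
      have := hxv S
      rw [huv] at this
      exact mem_iInter.1 this i
    have h2 : f^[t i] (x S') ∈ u i := by
      have := hxv S'
      rw [← h, huv] at this
      exact mem_iInter.1 this i
    rcases hu i with h3 | h3
    · rw [h3] at h1
      exact h1 ((hx S _ hs).1 hS)
    · rw [mem_singleton_iff.1 h3] at h2
      exact h2 ((hx S' _ hs).2 hS')
  refine Finset.card_le_card_of_injOn v (fun S _ => hvV S) ?_
  intro S hS S' hS' h
  simp only [Finset.coe_powerset, mem_preimage, mem_powerset_iff, Finset.coe_subset] at hS hS'
  ext s
  exact ⟨fun hs => key S S' h s (hS hs) hs, fun hs => key S' S h.symm s (hS' hs) hs⟩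

lemma IsIndepSet.mono {X : Type*} {f : X → X} {A B : Set X} {I I' : Set ℕ} (h : IsIndepSet f A B I)
    (hI : I' ⊆ I) : IsIndepSet f A B I' :=
  fun J hJ => h J (hJ.trans hI)

lemma IsIndepSet.mono_sets {X : Type*} {f : X → X} {A B A' B' : Set X} {I : Set ℕ} (h : IsIndepSet f A B I)
    (hA : A ⊆ A') (hB : B ⊆ B') : IsIndepSet f A' B' I := by
  intro J hJ hne S
  refine (h J hJ hne S).mono (iInter₂_mono fun i _ => preimage_mono ?_)
  cases S i <;> simpa

/-- Splicing ever longer blocks of independence: if independence sets for `A, B` have unbounded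
size, some increasing sequence has infinitely many initial segments at least half of which is
an independence set. -/
lemma exists_sequence {X : Type*} (f : X → X) (A B : Set X)
    (h : ∀ m : ℕ, ∃ J : Finset ℕ, IsIndepSet f A B ↑J ∧ m < J.card) :
    ∃ a : ℕ → ℕ, StrictMono a ∧ (∀ n, 0 < a n) ∧ ∀ N : ℕ, ∃ n ≥ N, ∃ J : Finset ℕ, J.Nonempty ∧
      IsIndepSet f A B ↑J ∧ n ≤ 2 * J.card ∧ ∀ s ∈ J, ∃ i : Fin n, a i = s := by
  classical
  -- discarding the elements up to `M`, independence sets can be moved beyond any bound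
  have h' : ∀ M m : ℕ, ∃ J : Finset ℕ, IsIndepSet f A B ↑J ∧ m < J.card ∧ ∀ s ∈ J, M < s := by
    intro M m
    obtain ⟨J, hJ, hm⟩ := h (m + (M + 1))
    refine ⟨J.filter (M < ·), hJ.mono (Finset.coe_subset.2 (Finset.filter_subset _ _)), ?_,
      fun s hs => (Finset.mem_filter.1 hs).2⟩
    have h1 := Finset.card_filter_add_card_filter_not (s := J) (M < ·)
    have h2 : (J.filter (fun s => ¬ M < s)).card ≤ (Finset.range (M + 1)).card := by
      refine Finset.card_le_card fun s hs => ?_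
      simp only [Finset.mem_filter, not_lt] at hs
      simp; omega
    simp only [Finset.card_range] at h2
    omega
  choose B' hB1 hB2 hB3 using h'
  let G : ℕ → Finset ℕ := fun k => Nat.rec ∅ (fun _ F => F ∪ B' (F.sup id) F.card) k
  have G0 : G 0 = ∅ := rfl
  have GS : ∀ k, G (k + 1) = G k ∪ B' ((G k).sup id) (G k).card := fun k => rfl
  have Gmono : Monotone G := monotone_nat_of_le_succ fun k => by
    rw [GS]; exact Finset.subset_union_left
  have Gpos : ∀ k, ∀ s ∈ G k, 0 < s := by
    intro k
    induction k with
    | zero => simp [G0]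
    | succ k ih =>
      intro s hs
      rw [GS, Finset.mem_union] at hs
      rcases hs with hs | hs
      · exact ih s hs
      · exact (Nat.zero_le _).trans_lt (hB3 _ _ s hs)
  -- each `G k` is an initial segment of the union
  have Gseg : ∀ k l, ∀ s ∈ G k, ∀ r ∈ G l, r < s → r ∈ G k := by
    intro k l
    induction l with
    | zero => simp [G0]
    | succ l ih =>
      intro s hs r hr hrs
      by_cases hkl : l + 1 ≤ k
      · exact Gmono hkl hr
      · rw [GS, Finset.mem_union] at hr
        rcases hr with hr | hr
        · exact ih s hs r hr hrs
        · have h1 := hB3 _ _ r hr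
          have h2 : s ≤ (G l).sup id :=
            Finset.le_sup (f := id) (Gmono (show k ≤ l by omega) hs)
          omega
  have Gcard : ∀ k, k ≤ (G k).card := by
    intro k
    induction k with
    | zero => simp
    | succ k ih =>
      have : (B' ((G k).sup id) (G k).card).card ≤ (G (k + 1)).card := by
        rw [GS]; exact Finset.card_le_card Finset.subset_union_right
      have := hB2 ((G k).sup id) (G k).card
      omega
  let p : ℕ → Prop := fun s => ∃ k, s ∈ G k
  have hinf : (Set.ofPred p).Infinite := by
    intro hfin
    have := Finset.card_le_card (s := G (hfin.toFinset.card + 1)) (t := hfin.toFinset)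
      (fun s hs => hfin.mem_toFinset.2 (show ∃ k, s ∈ G k from
        ⟨hfin.toFinset.card + 1, hs⟩))
    have := Gcard (hfin.toFinset.card + 1)
    omega
  refine ⟨Nat.nth p, Nat.nth_strictMono hinf, fun n => ?_, fun N => ?_⟩
  · obtain ⟨k, hk⟩ := Nat.nth_mem_of_infinite hinf n
    exact Gpos k _ hk
  · refine ⟨(G (N + 1)).card, by have := Gcard (N + 1); omega, B' ((G N).sup id) (G N).card,
      ?_, hB1 _ _, ?_, ?_⟩
    · rw [← Finset.card_pos]
      have := hB2 ((G N).sup id) (G N).card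
      omega
    · have h1 := hB2 ((G N).sup id) (G N).card
      have h2 := Finset.card_union_le (G N) (B' ((G N).sup id) (G N).card)
      rw [GS]; omega
    · intro s hs
      have hsG : s ∈ G (N + 1) := by rw [GS]; exact Finset.mem_union_right _ hs
      let _ : DecidablePred p := Classical.decPred p
      have hps : p s := show ∃ k, s ∈ G k from ⟨N + 1, hsG⟩
      refine ⟨⟨Nat.count p s, ?_⟩, Nat.nth_count hps⟩
      rw [Nat.count_eq_card_filter_range p]
      refine Finset.card_lt_card ⟨?_, ?_⟩
      · intro r hr
        simp only [Finset.mem_filter, Finset.mem_range] at hr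
        obtain ⟨hr1, l, hl⟩ := hr
        exact Gseg (N + 1) l s hsG r hl hr1
      · intro hsub
        have := hsub hsG
        simp at this

/-- In a null system, independence sets for two disjoint closed sets have bounded size. -/
lemma IsNull.bounded_indep {X : Type*} [TopologicalSpace X] {f : X → X} (hf : IsNull f)
    {A B : Set X} (hA : IsClosed A) (hB : IsClosed B) (hAB : Disjoint A B) :
    ∃ m : ℕ, ∀ J : Finset ℕ, IsIndepSet f A B ↑J → J.card ≤ m := by
  by_contra! hcon
  obtain ⟨a, ha, hpos, hblock⟩ := exists_sequence f A B hcon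
  have hU : IsOpenCover ({Aᶜ, Bᶜ} : Set (Set X)) := by
    refine ⟨?_, ?_⟩
    · rintro _ (rfl | h)
      · exact hA.isOpen_compl
      · rw [mem_singleton_iff.1 h]; exact hB.isOpen_compl
    · rw [sUnion_pair, ← compl_inter, hAB.inter_eq, compl_empty]
  have h0 := hf a ha hpos _ hU
  have hle : ENNReal.ofReal (Real.log 2 / 2) ≤ seqEnt f a {Aᶜ, Bᶜ} := by
    refine Filter.le_limsup_of_frequently_le' ?_
    rw [Filter.frequently_atTop]
    intro N
    obtain ⟨n, hn, J, hne, hJ, hnJ, hJa⟩ := hblock (N + 1)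
    refine ⟨n, by omega, ENNReal.ofReal_le_ofReal ?_⟩
    have h1 := two_pow_le_coverN f hAB (fun i : Fin n => a i) J hne hJ hJa
    have h2 : (J.card : ℝ) * Real.log 2 ≤
        Real.log (coverN (timeJoin f {Aᶜ, Bᶜ} (fun i : Fin n => a i))) := by
      rw [← Real.log_pow]
      exact Real.log_le_log (by positivity) (by exact_mod_cast h1)
    have h3 : (n : ℝ) ≤ 2 * J.card := by exact_mod_cast hnJ
    have hn0 : (0 : ℝ) < n := by exact_mod_cast (show 0 < n by omega)
    have h4 := Real.log_pos (by norm_num : (1 : ℝ) < 2)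
    rw [div_le_div_iff₀ (by norm_num) hn0]
    nlinarith
  rw [h0] at hle
  have : (0 : ℝ) < Real.log 2 / 2 := by
    have := Real.log_pos (by norm_num : (1 : ℝ) < 2)
    positivity
  simp only [nonpos_iff_eq_zero, ENNReal.ofReal_eq_zero] at hle
  linarith

/-- Polynomial growth of the maximal pattern complexity forces zero sequence entropy. -/
lemma IsNull.of_polyOrder {X : Type*} [TopologicalSpace X] [CompactSpace X] {f : X → X}
    (h : ∀ U : Set (Set X), IsOpenCover U → PolyOrder (patternComp f U)) : IsNull f := by
  intro a _ _ U hU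
  obtain ⟨C, hC, hpoly⟩ := h U hU
  obtain ⟨V, hVU, hVc⟩ : ∃ V : Finset (Set X), (V : Set (Set X)) ⊆ U ∧
      ⋃₀ (V : Set (Set X)) = univ := by
    classical
    obtain ⟨V, hV⟩ := isCompact_univ.elim_finite_subcover (fun u : U => (u : Set X))
      (fun u => hU.1 u u.2) (by rw [← sUnion_eq_iUnion]; exact hU.2.ge)
    refine ⟨V.image Subtype.val, ?_, ?_⟩
    · rw [Finset.coe_image]
      rintro _ ⟨u, -, rfl⟩
      exact u.2
    · rw [eq_univ_iff_forall]
      intro x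
      obtain ⟨u, hu, hx⟩ := mem_iUnion₂.1 (hV (mem_univ x))
      exact ⟨u, by simpa using hu, hx⟩
  have hbd : ∀ n : ℕ, coverN (timeJoin f U (fun i : Fin n => a i)) ≤ patternComp f U n := by
    intro n
    refine le_csSup ⟨V.card ^ n, ?_⟩ ⟨_, rfl⟩
    rintro _ ⟨t, rfl⟩
    obtain ⟨W, h1, h2, h3⟩ := exists_finset_join f V hVU hVc t
    exact (coverN_le W h1 h2).trans h3
  have hlog : ∀ n : ℕ, 1 ≤ n →
      Real.log (coverN (timeJoin f U (fun i : Fin n => a i))) / n ≤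
        Real.log (max C 1) / n + C * (Real.log n / n) := by
    intro n hn
    have hn' : (1 : ℝ) ≤ n := by exact_mod_cast hn
    have hle : (coverN (timeJoin f U (fun i : Fin n => a i)) : ℝ) ≤ max C 1 * (n : ℝ) ^ C :=
      (Nat.cast_le.2 (hbd n)).trans ((hpoly n hn).trans (by gcongr; exact le_max_left _ _))
    have hlog' : Real.log (coverN (timeJoin f U (fun i : Fin n => a i))) ≤
        Real.log (max C 1) + C * Real.log n := by
      have hm : (0 : ℝ) < max C 1 := by positivity
      have hnC : (0 : ℝ) < (n : ℝ) ^ C := Real.rpow_pos_of_pos (by linarith) _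
      rw [← Real.log_rpow (by linarith), ← Real.log_mul hm.ne' hnC.ne']
      rcases Nat.eq_zero_or_pos (coverN (timeJoin f U (fun i : Fin n => a i))) with h0 | h0
      · rw [h0, Nat.cast_zero, Real.log_zero]
        refine Real.log_nonneg ?_
        have := Real.one_le_rpow hn' hC.le
        nlinarith [le_max_right C 1]
      · exact Real.log_le_log (by exact_mod_cast h0) hle
    rw [mul_div_assoc', ← add_div]
    gcongr
  have hlim : Tendsto (fun n : ℕ => ENNReal.ofReal
      (Real.log (max C 1) / n + C * (Real.log n / n))) atTop (𝓝 0) := by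
    have h1 : Tendsto (fun n : ℕ => Real.log (max C 1) / n) atTop (𝓝 0) :=
      tendsto_const_div_atTop_nhds_zero_nat _
    have h2 : Tendsto (fun n : ℕ => Real.log n / n) atTop (𝓝 0) :=
      (Real.isLittleO_log_id_atTop.tendsto_div_nhds_zero).comp tendsto_natCast_atTop_atTop
    have h3 := ENNReal.tendsto_ofReal (h1.add (h2.const_mul C))
    simpa using h3
  refine le_antisymm ?_ zero_le
  rw [← hlim.limsup_eq]
  refine Filter.limsup_le_limsup ?_
  filter_upwards [eventually_ge_atTop 1] with n hn
  exact ENNReal.ofReal_le_ofReal (hlog n hn)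

/-! ### Sensitivity and horseshoes -/

/-- The one-dimensionality of a space `X` used below: for each `ε` finitely many sets with
nonempty interior suffice for every connected set of diameter exceeding `ε` to contain one. -/
def ThickConnected (X : Type*) [MetricSpace X] : Prop :=
  ∀ ε > 0, ∃ 𝓕 : Finset (Set X), (∀ P ∈ 𝓕, (interior P).Nonempty) ∧
    ∀ C : Set X, IsPreconnected C → (∃ y ∈ C, ∃ z ∈ C, ε < dist y z) → ∃ P ∈ 𝓕, P ⊆ C

/-- `W` is `ε`-stable: no iterate spreads `W` beyond diameter `ε`. -/
def StableSet {X : Type*} [MetricSpace X] (f : X → X) (ε : ℝ) (W : Set X) : Prop :=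
  ∀ y ∈ W, ∀ z ∈ W, ∀ t : ℕ, dist (f^[t] y) (f^[t] z) ≤ ε

/-- `V` is `ε`-sensitive: every nonempty open subset of `V` is spread beyond diameter `ε` by some
iterate, i.e. none of them is `ε`-stable. -/
def SensitiveSet {X : Type*} [MetricSpace X] (f : X → X) (ε : ℝ) (V : Set X) : Prop :=
  ∀ V' ⊆ V, IsOpen V' → V'.Nonempty → ¬ StableSet f ε V'

lemma subset_image_iterate_mul {X : Type*} {f : X → X} {P V : Set X} (hVP : V ⊆ P) {a : ℕ} (h : P ⊆ f^[a] '' V) (k : ℕ) :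
    P ⊆ f^[a * (k + 1)] '' V := by
  induction k with
  | zero => simpa using h
  | succ k ih =>
    intro p hp
    obtain ⟨q, hq, rfl⟩ := h hp
    obtain ⟨r, hr, rfl⟩ := ih (hVP hq)
    refine ⟨r, hr, ?_⟩
    rw [← Function.iterate_add_apply]
    congr 2
    ring

/-- A horseshoe: if two subsets of `P` are both mapped over `P`, possibly at different times,
they have arbitrarily large independence sets. -/
lemma indep_of_horseshoe {X : Type*} {f : X → X} {P V₁ V₂ : Set X} (hP : P.Nonempty) (h1 : V₁ ⊆ P) (h2 : V₂ ⊆ P)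
    {a b : ℕ} (ha : 0 < a) (hb : 0 < b) (hVa : P ⊆ f^[a] '' V₁) (hVb : P ⊆ f^[b] '' V₂)
    (m : ℕ) : ∃ J : Finset ℕ, IsIndepSet f V₁ V₂ ↑J ∧ m < J.card := by
  -- `a * b` is a common covering time
  have c1 : P ⊆ f^[a * b] '' V₁ := by
    have := subset_image_iterate_mul h1 hVa (b - 1)
    rwa [Nat.sub_add_cancel hb] at this
  have c2 : P ⊆ f^[a * b] '' V₂ := by
    have := subset_image_iterate_mul h2 hVb (a - 1)
    rwa [Nat.sub_add_cancel ha, mul_comm] at this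
  have key : ∀ n : ℕ, ∀ S : ℕ → Bool, ∃ x ∈ P, ∀ i < n,
      f^[a * b * i] x ∈ (if S i then V₁ else V₂) := by
    intro n
    induction n with
    | zero => intro S; obtain ⟨x, hx⟩ := hP; exact ⟨x, hx, by simp⟩
    | succ n ih =>
      intro S
      obtain ⟨y, hy, hyS⟩ := ih (fun i => S (i + 1))
      have hx : ∃ x ∈ (if S 0 then V₁ else V₂), f^[a * b] x = y := by
        cases S 0
        · simpa using c2 hy
        · simpa using c1 hy
      obtain ⟨x, hx, rfl⟩ := hx
      refine ⟨x, ?_, fun i hi => ?_⟩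
      · cases h : S 0
        · rw [h] at hx; exact h2 (by simpa using hx)
        · rw [h] at hx; exact h1 (by simpa using hx)
      · cases i with
        | zero => simpa using hx
        | succ i =>
          have := hyS i (by omega)
          rwa [← Function.iterate_add_apply, ← Nat.mul_succ] at this
  have hab : 0 < a * b := Nat.mul_pos ha hb
  refine ⟨(Finset.range (m + 1)).image (a * b * ·), ?_, ?_⟩
  · intro J hJ _ S
    obtain ⟨x, -, hx⟩ := key (m + 1) (fun i => S (a * b * i))
    refine ⟨x, mem_iInter₂.2 fun s hs => ?_⟩
    have hs' := hJ hs
    simp only [Finset.coe_image, mem_image, Finset.mem_coe, Finset.mem_range] at hs'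
    obtain ⟨i, hi, rfl⟩ := hs'
    exact hx i hi
  · rw [Finset.card_image_of_injective _ (fun i j h => Nat.eq_of_mul_eq_mul_left hab h)]
    simp

section Sensitivity

variable {X : Type*} [MetricSpace X] {f : X → X} {ε : ℝ}

lemma SensitiveSet.mono {V W : Set X} (h : SensitiveSet f ε W) (hVW : V ⊆ W) :
    SensitiveSet f ε V :=
  fun V' hV' => h V' (hV'.trans hVW)

/-- Inside an open set, any point has a neighbourhood that stays `ε`-small up to time `N`. -/
lemma exists_small_nhd (hf : Continuous f) (hε : 0 < ε) {V : Set X} (hV : IsOpen V) {x : X}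
    (hx : x ∈ V) (N : ℕ) : ∃ V' ⊆ V, IsOpen V' ∧ x ∈ V' ∧
      ∀ y ∈ V', ∀ z ∈ V', ∀ t ≤ N, dist (f^[t] y) (f^[t] z) < ε := by
  refine ⟨V ∩ ⋂ t ∈ Finset.range (N + 1), f^[t] ⁻¹' Metric.ball (f^[t] x) (ε / 2),
    inter_subset_left, hV.inter (isOpen_biInter_finset fun t _ =>
      Metric.isOpen_ball.preimage (hf.iterate t)), ⟨hx, ?_⟩, ?_⟩
  · simp [half_pos hε]
  · intro y hy z hz t ht
    have h1 := mem_iInter₂.1 hy.2 t (Finset.mem_range.2 (by omega))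
    have h2 := mem_iInter₂.1 hz.2 t (Finset.mem_range.2 (by omega))
    rw [mem_preimage, Metric.mem_ball] at h1 h2
    have := dist_triangle_right (f^[t] y) (f^[t] z) (f^[t] x)
    linarith

/-- Sensitivity is inherited by open subsets of forward images. -/
lemma SensitiveSet.image (hf : Continuous f) (hε : 0 < ε) {V P : Set X} (hVo : IsOpen V)
    (hV : SensitiveSet f ε V) {t : ℕ} (hP : P ⊆ f^[t] '' V) : SensitiveSet f ε (interior P) := by
  rintro V' hV' hV'o ⟨p, hp⟩ hst
  obtain ⟨x, hx, rfl⟩ := hP (interior_subset (hV' hp))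
  obtain ⟨W, hW, hWo, hxW, hsmall⟩ := exists_small_nhd hf hε
    (hVo.inter (hV'o.preimage (hf.iterate t))) ⟨hx, hp⟩ t
  refine hV W (fun y hy => (hW hy).1) hWo ⟨x, hxW⟩ fun y hy z hz s => ?_
  rcases le_total s t with hs | hs
  · exact (hsmall y hy z hz s hs).le
  · have := hst _ (hW hy).2 _ (hW hz).2 (s - t)
    rwa [← Function.iterate_add_apply, ← Function.iterate_add_apply, Nat.sub_add_cancel hs] at this

/-- A connected sensitive open set is mapped over a member of the family `𝓕`, which is then
sensitive itself; shrinking the set first makes the time positive. -/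
lemma SensitiveSet.exists_cover [LocallyConnectedSpace X] (hf : Continuous f) (hε : 0 < ε)
    {𝓕 : Finset (Set X)} (h𝓕 : ∀ C : Set X, IsPreconnected C →
      (∃ y ∈ C, ∃ z ∈ C, ε < dist y z) → ∃ P ∈ 𝓕, P ⊆ C)
    {V : Set X} (hVo : IsOpen V) (hne : V.Nonempty) (hV : SensitiveSet f ε V) :
    ∃ t, 0 < t ∧ ∃ P ∈ 𝓕, SensitiveSet f ε (interior P) ∧ P ⊆ f^[t] '' V := by
  obtain ⟨x, hx⟩ := hne
  obtain ⟨V₁, h1, h1o, hx1, hsmall⟩ := exists_small_nhd hf hε hVo hx 0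
  obtain ⟨W, hW, hWo, hxW, hWc⟩ :=
    locallyConnectedSpace_iff_subsets_isOpen_isConnected.1 ‹_› x V₁ (h1o.mem_nhds hx1)
  have hnot := hV W (hW.trans h1) hWo ⟨x, hxW⟩
  unfold StableSet at hnot
  push Not at hnot
  obtain ⟨y, hy, z, hz, t, hlt⟩ := hnot
  obtain ⟨P, hP, hPW⟩ := h𝓕 (f^[t] '' W)
    (hWc.isPreconnected.image _ (hf.iterate t).continuousOn)
    ⟨_, mem_image_of_mem _ hy, _, mem_image_of_mem _ hz, hlt⟩
  refine ⟨t, Nat.pos_of_ne_zero ?_, P, hP, (hV.mono (hW.trans h1)).image hf hε hWo hPW,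
    hPW.trans (image_mono (hW.trans h1))⟩
  rintro rfl
  exact absurd (hsmall y (hW hy) z (hW hz) 0 le_rfl) (not_lt.2 hlt.le)

/-- A null system has no sensitive nonempty open set. Otherwise follow the finitely many
sensitive members of `𝓕` to one from which everything reachable can reach back; two disjoint
small open pieces of it are then both mapped over it, which is a horseshoe. -/
lemma IsNull.not_sensitive [LocallyConnectedSpace X] (hX : ThickConnected X)
    (hf : Continuous f) (hnull : IsNull f) (hε : 0 < ε) {V : Set X} (hVo : IsOpen V)
    (hne : V.Nonempty) : ¬ SensitiveSet f ε V := by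
  classical
  intro hV
  obtain ⟨𝓕, hinterior, h𝓕⟩ := hX ε hε
  let ℬ : Finset (Set X) := 𝓕.filter (fun P => SensitiveSet f ε (interior P))
  let reach : Set X → Finset (Set X) := fun P => ℬ.filter (fun Q => ∃ t : ℕ, Q ⊆ f^[t] '' P)
  have hℬ : ℬ.Nonempty := by
    obtain ⟨t, -, P, hP, hPs, -⟩ := hV.exists_cover hf hε h𝓕 hVo hne
    exact ⟨P, Finset.mem_filter.2 ⟨hP, hPs⟩⟩
  obtain ⟨P, hPℬ, hmin⟩ := Finset.exists_min_image ℬ (fun P => (reach P).card) hℬ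
  have hPs := (Finset.mem_filter.1 hPℬ).2
  have hPi := hinterior P (Finset.mem_filter.1 hPℬ).1
  have hPreach : P ∈ reach P := Finset.mem_filter.2 ⟨hPℬ, 0, by simp⟩
  have hback : ∀ Q ∈ reach P, ∃ t : ℕ, P ⊆ f^[t] '' Q := by
    intro Q hQ
    obtain ⟨hQℬ, t, ht⟩ := Finset.mem_filter.1 hQ
    have hsub : reach Q ⊆ reach P := by
      intro R hR
      obtain ⟨hRℬ, s, hs⟩ := Finset.mem_filter.1 hR
      refine Finset.mem_filter.2 ⟨hRℬ, s + t, ?_⟩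
      rw [Function.iterate_add, image_comp]
      exact hs.trans (image_mono ht)
    have heq := Finset.eq_of_subset_of_card_le hsub (hmin Q hQℬ)
    rw [← heq] at hPreach
    exact (Finset.mem_filter.1 hPreach).2
  -- every open piece of `P` is eventually mapped over `P`
  have hcov : ∀ W ⊆ interior P, IsOpen W → W.Nonempty → ∃ t, 0 < t ∧ P ⊆ f^[t] '' W := by
    intro W hW hWo hWne
    obtain ⟨t, ht, Q, hQ, hQs, hQW⟩ := (hPs.mono hW).exists_cover hf hε h𝓕 hWo hWne
    obtain ⟨s, hs⟩ := hback Q (Finset.mem_filter.2 ⟨Finset.mem_filter.2 ⟨hQ, hQs⟩, t,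
      hQW.trans (image_mono (hW.trans interior_subset))⟩)
    refine ⟨s + t, by omega, ?_⟩
    rw [Function.iterate_add, image_comp]
    exact hs.trans (image_mono hQW)
  have htwo : ∃ y ∈ interior P, ∃ z ∈ interior P, y ≠ z := by
    by_contra! hcon
    refine hPs _ subset_rfl isOpen_interior hPi fun y hy z hz t => ?_
    rw [hcon y hy z hz, dist_self]
    exact hε.le
  obtain ⟨y, hy, z, hz, hyz⟩ := htwo
  obtain ⟨u, hyu, huo, v, hzv, hvo, huv⟩ := exists_open_nhds_disjoint_closure hyz
  obtain ⟨a, ha, hVa⟩ := hcov (interior P ∩ u) inter_subset_left (isOpen_interior.inter huo)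
    ⟨y, hy, hyu⟩
  obtain ⟨b, hb, hVb⟩ := hcov (interior P ∩ v) inter_subset_left (isOpen_interior.inter hvo)
    ⟨z, hz, hzv⟩
  obtain ⟨m, hm⟩ := hnull.bounded_indep isClosed_closure isClosed_closure huv
  obtain ⟨J, hJ, hmJ⟩ := indep_of_horseshoe (hPi.mono interior_subset)
    (inter_subset_left.trans interior_subset) (inter_subset_left.trans interior_subset)
    ha hb hVa hVb m
  have := hm J (hJ.mono_sets (inter_subset_right.trans subset_closure)
    (inter_subset_right.trans subset_closure))
  omega

end Sensitivity

/-! ### Decomposition of the phase space -/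

/-- The phase space splits into finitely many disjoint closed sets, each inside one element of the
cover, and finitely many sets all of whose iterates lie inside one element of the cover.
The union of the `ε`-stable open sets is dense, so its complement is totally disconnected; the
closed sets are thickened pieces of a clopen partition of this complement. -/
lemma IsNull.exists_decomposition {X : Type*} [MetricSpace X] [CompactSpace X]
    [LocallyConnectedSpace X] (hX : ThickConnected X) {f : X → X} (hf : Continuous f)
    (hnull : IsNull f) {U : Set (Set X)} (hU : IsOpenCover U) :
    ∃ (N : ℕ) (A : Fin N → Set X) (𝒲 : Finset (Set X)), (∀ p, IsClosed (A p)) ∧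
      (∀ p q, p ≠ q → Disjoint (A p) (A q)) ∧ (∀ p, ∃ u ∈ U, A p ⊆ u) ∧
      (∀ x, (∃ p, x ∈ A p) ∨ ∃ W ∈ 𝒲, x ∈ W) ∧
      ∀ W ∈ 𝒲, ∀ x ∈ W, ∀ t : ℕ, ∃ u ∈ U, ∀ y ∈ W, f^[t] y ∈ u := by
  classical
  obtain ⟨δ, hδ, hleb⟩ := lebesgue_number_lemma_of_metric_sUnion isCompact_univ hU.1 hU.2.ge
  obtain ⟨ε, hε, hεδ⟩ : ∃ ε > 0, ε < δ := ⟨δ / 2, by linarith, by linarith⟩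
  let ι := {W : Set X // IsOpen W ∧ StableSet f ε W}
  let G : Set X := ⋃ W : ι, (W : Set X)
  have hGo : IsOpen G := isOpen_iUnion fun W => W.2.1
  have hGint : interior Gᶜ = ∅ := by
    by_contra hne
    refine hnull.not_sensitive hX hf hε isOpen_interior (nonempty_iff_ne_empty.2 hne) ?_
    rintro V hV hVo ⟨x, hx⟩ hst
    exact interior_subset (hV hx) (mem_iUnion.2 ⟨⟨V, hVo, hst⟩, hx⟩)
  have hKc : IsCompact Gᶜ := hGo.isClosed_compl.isCompact
  have : CompactSpace (Gᶜ : Set X) := isCompact_iff_compactSpace.1 hKc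
  have htd : IsTotallyDisconnected Gᶜ := by
    intro C hC hCc y hy z hz
    by_contra hyz
    have hd : 0 < dist y z := dist_pos.2 hyz
    obtain ⟨𝓕, hinterior, h𝓕⟩ := hX (dist y z / 2) (by linarith)
    obtain ⟨P, hP, hPC⟩ := h𝓕 C hCc ⟨y, hy, z, hz, by linarith⟩
    obtain ⟨w, hw⟩ := hinterior P hP
    have : w ∈ interior Gᶜ := interior_mono (hPC.trans hC) hw
    simp [hGint] at this
  have : TotallyDisconnectedSpace (Gᶜ : Set X) :=
    totallyDisconnectedSpace_subtype_iff.2 htd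
  obtain ⟨N, D, hDne, hDsmall, hDcov, hDdisj⟩ :=
    ContinuousMap.exists_disjoint_nonempty_clopen_cover_of_mem_nhds_diagonal
      (⟨Subtype.val, continuous_subtype_val⟩ : C((Gᶜ : Set X), X))
      (S := {p : X × X | dist p.1 p.2 < ε}) (by
        refine IsOpen.mem_nhdsSet ?_ |>.2 ?_
        · exact isOpen_lt continuous_dist continuous_const
        · rintro ⟨x, y⟩ (rfl : x = y)
          simpa using hε)
  let K : Fin N → Set X := fun p => Subtype.val '' (D p : Set (Gᶜ : Set X))
  have hK : ∀ p, IsCompact (K p) := fun p =>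
    (D p).isClopen.1.isCompact.image continuous_subtype_val
  have hKd : ∀ p q, p ≠ q → Disjoint (K p) (K q) := by
    intro p q hpq
    refine (disjoint_image_iff Subtype.val_injective).2 ?_
    have := hDdisj hpq
    rw [Function.onFun, disjoint_iff] at this
    rw [Set.disjoint_iff_inter_eq_empty, ← TopologicalSpace.Clopens.coe_inf, this]
    rfl
  have hKu : ∀ p, ∃ u ∈ U, K p ⊆ u := by
    intro p
    obtain ⟨x, hx⟩ : (D p : Set (Gᶜ : Set X)).Nonempty := by
      rw [nonempty_iff_ne_empty]
      intro h
      exact hDne p (SetLike.coe_injective (by simpa using h))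
    obtain ⟨u, hu, hxu⟩ := hleb x (mem_univ _)
    refine ⟨u, hu, ?_⟩
    rintro _ ⟨y, hy, rfl⟩
    exact hxu (Metric.mem_ball.2 ((hDsmall p y hy x hx).trans hεδ))
  choose u hu hKu using hKu
  -- a common radius for all thickenings
  have hη : ∀ᶠ η in 𝓝[>] (0 : ℝ), (∀ p, Metric.cthickening η (K p) ⊆ u p) ∧
      ∀ p q, p ≠ q → Disjoint (Metric.cthickening η (K p)) (Metric.cthickening η (K q)) := by
    refine (eventually_all.2 fun p => ?_).and
      (eventually_all.2 fun p => eventually_all.2 fun q => ?_)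
    · obtain ⟨r, hr, h⟩ := (hK p).exists_cthickening_subset_open (hU.1 _ (hu p)) (hKu p)
      filter_upwards [Ioc_mem_nhdsGT hr] with η hη
      exact (Metric.cthickening_mono hη.2 _).trans h
    · by_cases hpq : p = q
      · exact Eventually.of_forall fun _ h => absurd hpq h
      · obtain ⟨r, hr, h⟩ := (hKd p q hpq).exists_cthickenings (hK p) (hK q).isClosed
        filter_upwards [Ioc_mem_nhdsGT hr] with η hη _
        exact h.mono (Metric.cthickening_mono hη.2 _) (Metric.cthickening_mono hη.2 _)
  obtain ⟨η, ⟨hηu, hηd⟩, hη0⟩ := (hη.and self_mem_nhdsWithin).exists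
  have hRc : IsCompact (⋃ p, Metric.thickening η (K p))ᶜ :=
    (isOpen_iUnion fun p => Metric.isOpen_thickening).isClosed_compl.isCompact
  obtain ⟨t, ht⟩ := hRc.elim_finite_subcover (fun W : ι => (W : Set X)) (fun W => W.2.1) (by
    intro x hx
    by_contra hxG
    obtain ⟨p, hp⟩ := mem_iUnion.1 (hDcov (mem_univ (⟨x, hxG⟩ : (Gᶜ : Set X))))
    exact hx (mem_iUnion.2 ⟨p, Metric.self_subset_thickening hη0 _ ⟨_, hp, rfl⟩⟩))
  refine ⟨N, fun p => Metric.cthickening η (K p), t.image Subtype.val,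
    fun p => Metric.isClosed_cthickening, hηd, fun p => ⟨u p, hu p, hηu p⟩, fun x => ?_, ?_⟩
  · by_cases hx : x ∈ ⋃ p, Metric.thickening η (K p)
    · obtain ⟨p, hp⟩ := mem_iUnion.1 hx
      exact Or.inl ⟨p, Metric.thickening_subset_cthickening _ _ hp⟩
    · obtain ⟨W, hW, hxW⟩ := mem_iUnion₂.1 (ht hx)
      exact Or.inr ⟨W, Finset.mem_image_of_mem _ hW, hxW⟩
  · intro W hW x hx s
    obtain ⟨W, -, rfl⟩ := Finset.mem_image.1 hW
    obtain ⟨v, hv, hsub⟩ := hleb (f^[s] x) (mem_univ _)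
    exact ⟨v, hv, fun y hy => hsub (Metric.mem_ball.2 ((W.2.2 y hy x hx s).trans_lt hεδ))⟩

/-! ### Counting itineraries -/

/-- If points with equal keys always share an element of the cover, a subcover needs at most one
element per key. -/
lemma coverN_le_of_key {X κ : Type*} {U : Set (Set X)} (key : X → κ) (K : Finset κ)
    (hK : ∀ x, key x ∈ K) (h : ∀ x, ∃ E ∈ U, ∀ y, key y = key x → y ∈ E) :
    coverN U ≤ K.card := by
  classical
  choose E hE hkey using h
  let g : κ → Set X := fun k => if h : ∃ x, key x = k then E h.choose else ∅
  have hg : ∀ x, g (key x) ∈ U ∧ x ∈ g (key x) := by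
    intro x
    have hx : ∃ y, key y = key x := ⟨x, rfl⟩
    simp only [g, dif_pos hx]
    exact ⟨hE _, hkey _ _ hx.choose_spec.symm⟩
  refine (coverN_le ((K.filter (fun k => ∃ x, key x = k)).image g) ?_ ?_).trans
    (Finset.card_image_le.trans (Finset.card_le_card (Finset.filter_subset _ _)))
  · intro A hA
    simp only [Finset.coe_image, Finset.coe_filter, mem_image, mem_ofPred_eq] at hA
    obtain ⟨_, ⟨-, x, rfl⟩, rfl⟩ := hA
    exact (hg x).1
  · rw [eq_univ_iff_forall]
    intro x
    refine ⟨g (key x), ?_, (hg x).2⟩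
    simp only [Finset.coe_image, Finset.coe_filter, mem_image, mem_ofPred_eq]
    exact ⟨_, ⟨hK x, x, rfl⟩, rfl⟩

lemma card_small_subsets_le (T : Finset ℕ) {n : ℕ} (hT : T.card ≤ n) (hn : 1 ≤ n) (m : ℕ) :
    (T.powerset.filter (fun J => J.card ≤ m)).card ≤ (m + 1) * n ^ m := by
  classical
  have h : T.powerset.filter (fun J => J.card ≤ m) ⊆
      (Finset.range (m + 1)).biUnion (fun k => T.powersetCard k) := by
    intro J hJ
    rw [Finset.mem_filter, Finset.mem_powerset] at hJ
    simp only [Finset.mem_biUnion, Finset.mem_range, Finset.mem_powersetCard]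
    exact ⟨J.card, by omega, hJ.1, rfl⟩
  refine (Finset.card_le_card h).trans (Finset.card_biUnion_le.trans ?_)
  refine (Finset.sum_le_card_nsmul _ _ (n ^ m) fun k hk => ?_).trans (by simp)
  rw [Finset.card_powersetCard]
  calc T.card.choose k ≤ T.card ^ k := Nat.choose_le_pow _ _
    _ ≤ n ^ k := Nat.pow_le_pow_left hT k
    _ ≤ n ^ m := Nat.pow_le_pow_right hn (by rw [Finset.mem_range] at hk; omega)

open Classical in
/-- The times `s ∈ T` at which the orbit of `x` lies in `A p`, recorded as long as the orbit,
observed at the times in `T`, has not yet left `⋃ q, A q`. -/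
def visitWord {X ι : Type*} (f : X → X) (A : ι → Set X) (T : Finset ℕ) (p : ι) (x : X) :
    Finset ℕ :=
  T.filter (fun s => (∀ r ∈ T, r ≤ s → ∃ q, f^[r] x ∈ A q) ∧ f^[s] x ∈ A p)

lemma mem_visitWord {X ι : Type*} {f : X → X} {A : ι → Set X} {T : Finset ℕ} {p : ι} {x : X}
    {s : ℕ} : s ∈ visitWord f A T p x ↔
      s ∈ T ∧ (∀ r ∈ T, r ≤ s → ∃ q, f^[r] x ∈ A q) ∧ f^[s] x ∈ A p := by
  simp [visitWord]

open Classical in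
/-- The Sauer–Shelah lemma bounds the number of visit words polynomially. If the words shatter
`J`, then restricting to the words which contain `max J` shows that `J \ {max J}` is an
independence set for `A p` and the union of the other pieces. -/
lemma card_visitWords_le {X ι : Type*} {f : X → X} {A : ι → Set X} {p : ι} {m : ℕ}
    (hm : ∀ J : Finset ℕ, IsIndepSet f (A p) (⋃ q ∈ {q | q ≠ p}, A q) ↑J → J.card ≤ m)
    (T : Finset ℕ) {n : ℕ} (hT : T.card ≤ n) (hn : 1 ≤ n) :
    (T.powerset.filter (fun w => ∃ x, visitWord f A T p x = w)).card ≤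
      (m + 2) * n ^ (m + 1) := by
  refine (Finset.card_le_card_shatterer _).trans
    ((Finset.card_le_card fun J hJ => ?_).trans (card_small_subsets_le T hT hn (m + 1)))
  rw [Finset.mem_shatterer] at hJ
  have hJT : J ⊆ T := by
    obtain ⟨w, hw, hJw⟩ := hJ.exists_superset
    exact hJw.trans (Finset.mem_powerset.1 (Finset.mem_filter.1 hw).1)
  rw [Finset.mem_filter, Finset.mem_powerset]
  refine ⟨hJT, ?_⟩
  rcases J.eq_empty_or_nonempty with rfl | hne
  · simp
  set M := J.max' hne with hM
  have hMJ : M ∈ J := J.max'_mem hne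
  have hcard := Finset.card_erase_add_one hMJ
  suffices (J.erase M).card ≤ m by omega
  refine hm _ fun J' hJ' _ S => ?_
  obtain ⟨w, hw, hJw⟩ := hJ (t := J.filter (fun s => s = M ∨ (s ∈ J' ∧ S s = true)))
    (Finset.filter_subset _ _)
  obtain ⟨x, rfl⟩ := (Finset.mem_filter.1 hw).2
  have hiff : ∀ s ∈ J, s ∈ visitWord f A T p x ↔ s = M ∨ (s ∈ J' ∧ S s = true) := by
    intro s hs
    have := Finset.ext_iff.1 hJw s
    simpa [hs] using this
  have hpre := (mem_visitWord.1 ((hiff M hMJ).2 (Or.inl rfl))).2.1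
  refine ⟨x, mem_iInter₂.2 fun s hs => ?_⟩
  have hsJ : s ∈ J.erase M := hJ' hs
  rw [Finset.mem_erase] at hsJ
  cases hS : S s
  · have hnot : s ∉ visitWord f A T p x := by
      rw [hiff s hsJ.2]
      simp [hsJ.1, hS]
    obtain ⟨q, hq⟩ := hpre s (hJT hsJ.2) (J.le_max' s hsJ.2)
    have hqp : q ≠ p := by
      rintro rfl
      exact hnot (mem_visitWord.2 ⟨hJT hsJ.2,
        fun r hr hrs => hpre r hr (hrs.trans (J.le_max' s hsJ.2)), hq⟩)
    simpa using ⟨q, hqp, hq⟩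
  · have := (mem_visitWord.1 ((hiff s hsJ.2).2 (Or.inr ⟨hs, hS⟩))).2.2
    simpa using this

/-- In a null system on a compact locally connected one-dimensional space, all maximal pattern
complexities are of polynomial order. A point is described by its visit words together with the
stable sets containing the first observed orbit point outside the closed pieces. -/
lemma IsNull.polyOrder {X : Type*} [MetricSpace X] [CompactSpace X]
    [LocallyConnectedSpace X] (hX : ThickConnected X) {f : X → X} (hf : Continuous f)
    (hnull : IsNull f) {U : Set (Set X)} (hU : IsOpenCover U) : PolyOrder (patternComp f U) := by
  classical
  obtain ⟨N, A, 𝒲, hAc, hAd, hAu, hcov, h𝒲⟩ := hnull.exists_decomposition hX hf hU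
  have hind : ∀ p, ∃ m : ℕ, ∀ J : Finset ℕ,
      IsIndepSet f (A p) (⋃ q ∈ {q | q ≠ p}, A q) ↑J → J.card ≤ m := fun p =>
    hnull.bounded_indep (hAc p) ((Set.toFinite _).isClosed_biUnion fun q _ => hAc q)
      (disjoint_iUnion₂_right.2 fun q hq => hAd p q (Ne.symm hq))
  choose m' hm' using hind
  obtain ⟨m, hm⟩ : ∃ m, ∀ p, m' p ≤ m :=
    ⟨Finset.univ.sup m', fun p => Finset.le_sup (Finset.mem_univ p)⟩
  have hbound : ∀ n : ℕ, 1 ≤ n → patternComp f U n ≤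
      ((m + 2) * n ^ (m + 1)) ^ N * 2 ^ 𝒲.card := by
    intro n hn
    refine csSup_le' ?_
    rintro _ ⟨t, rfl⟩
    let T : Finset ℕ := Finset.univ.image t
    have hT : T.card ≤ n := Finset.card_image_le.trans (by simp)
    -- the stable sets containing the first exit point from the closed pieces
    let exitSets : X → Finset (Set X) := fun x => 𝒲.filter (fun W => ∃ τ ∈ T,
      (∀ r ∈ T, r < τ → ∃ q, f^[r] x ∈ A q) ∧ (¬ ∃ q, f^[τ] x ∈ A q) ∧ f^[τ] x ∈ W)
    let key : X → (Fin N → Finset ℕ) × Finset (Set X) :=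
      fun x => (fun p => visitWord f A T p x, exitSets x)
    let words : Fin N → Finset (Finset ℕ) :=
      fun p => T.powerset.filter (fun w => ∃ x, visitWord f A T p x = w)
    refine (coverN_le_of_key key (Fintype.piFinset words ×ˢ 𝒲.powerset) ?_ ?_).trans ?_
    · intro x
      rw [Finset.mem_product, Fintype.mem_piFinset, Finset.mem_powerset]
      exact ⟨fun p => Finset.mem_filter.2
          ⟨Finset.mem_powerset.2 fun s hs => (mem_visitWord.1 hs).1, x, rfl⟩,
        Finset.filter_subset _ _⟩
    · intro x
      suffices h : ∀ s ∈ T, ∃ u ∈ U, ∀ y, key y = key x → f^[s] y ∈ u by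
        choose u hu hkey using fun i : Fin n =>
          h (t i) (Finset.mem_image_of_mem _ (Finset.mem_univ i))
        exact ⟨_, ⟨u, hu, rfl⟩, fun y hy => mem_iInter.2 fun i => hkey i y hy⟩
      intro s hs
      have hword : ∀ y, key y = key x → ∀ p r, r ∈ visitWord f A T p x →
          r ∈ visitWord f A T p y := by
        intro y hy p r hr
        have := congrFun (Prod.ext_iff.1 hy).1 p
        simp only [key] at this
        rwa [this]
      by_cases hgood : ∀ r ∈ T, r ≤ s → ∃ q, f^[r] x ∈ A q
      · obtain ⟨p, hp⟩ := hgood s hs le_rfl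
        obtain ⟨u, hu, hAu⟩ := hAu p
        exact ⟨u, hu, fun y hy =>
          hAu (mem_visitWord.1 (hword y hy p s (mem_visitWord.2 ⟨hs, hgood, hp⟩))).2.2⟩
      · -- `τ` is the first exit time of `x`
        push Not at hgood
        have hex : ∃ τ, τ ∈ T ∧ ¬ ∃ q, f^[τ] x ∈ A q := by
          obtain ⟨r, hr, -, h⟩ := hgood
          exact ⟨r, hr, by simpa using h⟩
        obtain ⟨hτT, hτ⟩ := Nat.find_spec hex
        have hmin : ∀ r ∈ T, r < Nat.find hex → ∃ q, f^[r] x ∈ A q := by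
          intro r hr hlt
          have := Nat.find_min hex hlt
          push Not at this
          exact this hr
        have hle : Nat.find hex ≤ s := by
          obtain ⟨r, hr, hrs, h⟩ := hgood
          exact (Nat.find_min' hex ⟨hr, by simpa using h⟩).trans hrs
        set τ := Nat.find hex with hτdef
        obtain ⟨W, hW, hxW⟩ := (hcov (f^[τ] x)).resolve_left hτ
        obtain ⟨u, hu, hWu⟩ := h𝒲 W hW _ hxW (s - τ)
        refine ⟨u, hu, fun y hy => ?_⟩
        suffices hyW : f^[τ] y ∈ W by
          have := hWu _ hyW
          rwa [← Function.iterate_add_apply, Nat.sub_add_cancel hle] at this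
        have hWx : W ∈ exitSets x := Finset.mem_filter.2 ⟨hW, τ, hτT, hmin, hτ, hxW⟩
        have hexit : exitSets y = exitSets x := (Prod.ext_iff.1 hy).2
        rw [← hexit] at hWx
        obtain ⟨-, σ, hσT, hσmin, hσ, hσW⟩ := Finset.mem_filter.1 hWx
        -- equal visit words force equal first exit times
        have hτσ : ¬ τ < σ := by
          intro hlt
          obtain ⟨q, hq⟩ := hσmin τ hτT hlt
          have h1 : τ ∈ visitWord f A T q y :=
            mem_visitWord.2 ⟨hτT, fun r hr hrτ => hσmin r hr (hrτ.trans_lt hlt), hq⟩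
          have h2 : visitWord f A T q y = visitWord f A T q x :=
            congrFun (Prod.ext_iff.1 hy).1 q
          rw [h2] at h1
          exact hτ ⟨q, (mem_visitWord.1 h1).2.2⟩
        have hστ : ¬ σ < τ := by
          intro hlt
          obtain ⟨q, hq⟩ := hmin σ hσT hlt
          exact hσ ⟨q, (mem_visitWord.1 (hword y hy q σ (mem_visitWord.2
            ⟨hσT, fun r hr hrσ => hmin r hr (hrσ.trans_lt hlt), hq⟩))).2.2⟩
        rwa [show τ = σ by omega]
    · rw [Finset.card_product, Fintype.card_piFinset, Finset.card_powerset]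
      refine Nat.mul_le_mul_right _ ?_
      refine (Finset.prod_le_pow_card _ _ ((m + 2) * n ^ (m + 1)) fun p _ => ?_).trans (by simp)
      exact card_visitWords_le (fun J hJ => (hm' p J hJ).trans (hm p)) T hT hn
  set D : ℕ := (m + 2) ^ N * 2 ^ 𝒲.card + (m + 1) * N with hD
  have hDpos : 0 < D := by positivity
  refine ⟨D, by exact_mod_cast hDpos, fun n hn => ?_⟩
  rw [Real.rpow_natCast]
  have hle : patternComp f U n ≤ D * n ^ D := by
    refine (hbound n hn).trans ?_
    calc ((m + 2) * n ^ (m + 1)) ^ N * 2 ^ 𝒲.card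
        = ((m + 2) ^ N * 2 ^ 𝒲.card) * n ^ ((m + 1) * N) := by rw [mul_pow, ← pow_mul]; ring
      _ ≤ D * n ^ D := Nat.mul_le_mul (Nat.le_add_right _ _)
          (Nat.pow_le_pow_right hn (Nat.le_add_left _ _))
  exact_mod_cast hle

/-! ### The circle -/

/-- The arc `[k / M, (k + 1) / M]` of the circle. -/
def gridArc (M : ℕ) (k : ℤ) : Set Circle1 := projS '' Icc ((k : ℝ) / M) ((k + 1) / M)

lemma gridArc_emod {M : ℕ} (hM : 0 < M) (k : ℤ) : gridArc M (k % M) = gridArc M k := by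
  have hM' : (M : ℝ) ≠ 0 := by positivity
  have hk : (k : ℝ) = (k % (M : ℤ) : ℤ) + (M : ℝ) * (k / (M : ℤ) : ℤ) := by
    exact_mod_cast (Int.emod_add_mul_ediv k M).symm
  have hper : ∀ (x : ℝ) (j : ℤ), projS (x + j) = projS x := by
    intro x j
    simp [projS]
  unfold gridArc
  generalize k % (M : ℤ) = r at *
  generalize k / (M : ℤ) = j at *
  ext z
  constructor
  · rintro ⟨x, hx, rfl⟩
    refine ⟨x + j, ?_, hper x j⟩
    rw [hk]
    constructor
    · have := hx.1
      rw [div_le_iff₀ (by positivity)] at *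
      linarith
    · have := hx.2
      rw [le_div_iff₀ (by positivity)] at *
      linarith
  · rintro ⟨x, hx, rfl⟩
    refine ⟨x - j, ?_, by have := hper (x - j) j; rw [sub_add_cancel] at this; exact this.symm⟩
    rw [hk] at hx
    constructor
    · have := hx.1
      rw [div_le_iff₀ (by positivity)] at *
      linarith
    · have := hx.2
      rw [le_div_iff₀ (by positivity)] at *
      linarith

lemma continuous_projS : Continuous projS := AddCircle.continuous_mk' 1

lemma isOpenMap_projS : IsOpenMap projS := QuotientAddGroup.isOpenMap_coe

lemma dist_projS_le (x y : ℝ) : dist (projS x) (projS y) ≤ |x - y| := by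
  rw [dist_eq_norm]
  exact QuotientAddGroup.norm_mk_le_norm (m := x - y)

/-- A connected set missing a point of each arc of the grid of mesh `1 / M` is trapped between
two missing points at distance at most `3 / M`. -/
lemma thickConnected_circle : ThickConnected Circle1 := by
  classical
  intro ε hε
  obtain ⟨M, hM⟩ := exists_nat_gt (3 / ε)
  have hM0 : (0 : ℝ) < M := (by positivity : 0 < 3 / ε).trans hM
  have hM0' : 0 < M := by exact_mod_cast hM0
  rw [div_lt_iff₀ hε] at hM
  refine ⟨(Finset.range M).image (fun k : ℕ => gridArc M k), ?_, ?_⟩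
  · intro P hP
    obtain ⟨k, -, rfl⟩ := Finset.mem_image.1 hP
    have hlt : ((k : ℤ) : ℝ) / M < (((k : ℤ) : ℝ) + 1) / M := by gcongr; linarith
    obtain ⟨x, hx⟩ := exists_between hlt
    exact ⟨projS x, interior_maximal (image_mono Ioo_subset_Icc_self)
      (isOpenMap_projS _ isOpen_Ioo) ⟨x, hx, rfl⟩⟩
  · rintro C hC ⟨y, hy, z, hz, hyz⟩
    by_contra! hcon
    have hmiss : ∀ k : ℤ, ∃ x ∈ Icc ((k : ℝ) / M) ((k + 1) / M), projS x ∉ C := by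
      intro k
      have hnn : 0 ≤ k % (M : ℤ) := Int.emod_nonneg _ (by positivity)
      have hlt : k % (M : ℤ) < M := Int.emod_lt_of_pos _ (by exact_mod_cast hM0')
      have hmem : gridArc M k ∈ (Finset.range M).image (fun k : ℕ => gridArc M k) := by
        refine Finset.mem_image.2 ⟨(k % (M : ℤ)).toNat, ?_, ?_⟩
        · rw [Finset.mem_range]; omega
        · rw [Int.toNat_of_nonneg hnn, gridArc_emod hM0']
      obtain ⟨_, ⟨x, hx, rfl⟩, hxC⟩ := not_subset.1 (hcon _ hmem)
      exact ⟨x, hx, hxC⟩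
    obtain ⟨x, rfl⟩ : ∃ x : ℝ, projS x = y := QuotientAddGroup.mk_surjective y
    let k : ℤ := ⌊x * M⌋
    have hk1 : (k : ℝ) / M ≤ x := by rw [div_le_iff₀ hM0]; exact Int.floor_le _
    have hk2 : x < (k + 1) / M := by rw [lt_div_iff₀ hM0]; exact Int.lt_floor_add_one _
    obtain ⟨u, hu, huC⟩ := hmiss (k - 1)
    obtain ⟨w, hw, hwC⟩ := hmiss (k + 1)
    push_cast at hu hw
    rw [sub_add_cancel] at hu
    have hux : u < x := lt_of_le_of_ne (hu.2.trans hk1) (by rintro rfl; exact huC hy)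
    have hxw : x < w := hk2.trans_le hw.1
    have hwu : w - u < ε := by
      have h1 : w - u ≤ ((k : ℝ) + 1 + 1) / M - (k - 1) / M := sub_le_sub hw.2 hu.1
      rw [← sub_div] at h1
      refine h1.trans_lt ?_
      rw [div_lt_iff₀ hM0]
      linarith
    have hsub : C ⊆ projS '' Ioo u w := by
      refine hC.subset_left_of_subset_union (isOpenMap_projS _ isOpen_Ioo)
        (v := (projS '' Icc u w)ᶜ)
        ((isCompact_Icc.image continuous_projS).isClosed.isOpen_compl) ?_ ?_
        ⟨_, hy, x, ⟨hux, hxw⟩, rfl⟩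
      · exact disjoint_compl_right_iff_subset.2 (image_mono Ioo_subset_Icc_self)
      · intro c hc
        by_cases h : c ∈ projS '' Icc u w
        · obtain ⟨v, hv, rfl⟩ := h
          refine Or.inl ⟨v, ⟨lt_of_le_of_ne hv.1 ?_, lt_of_le_of_ne hv.2 ?_⟩, rfl⟩
          · rintro rfl; exact huC hc
          · rintro rfl; exact hwC hc
        · exact Or.inr h
    obtain ⟨v, hv, rfl⟩ := hsub hz
    have h1 := dist_projS_le x v
    have h2 : |x - v| ≤ w - u := by rw [abs_le]; constructor <;> linarith [hv.1, hv.2]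
    linarith

instance : LocallyConnectedSpace Circle1 := by
  refine locallyConnectedSpace_iff_subsets_isOpen_isConnected.2 fun x V hV => ?_
  obtain ⟨x, rfl⟩ : ∃ y : ℝ, projS y = x := QuotientAddGroup.mk_surjective x
  obtain ⟨r, hr, hball⟩ := Metric.mem_nhds_iff.1 (continuous_projS.continuousAt.preimage_mem_nhds hV)
  refine ⟨projS '' Metric.ball x r, image_subset_iff.2 hball, isOpenMap_projS _ Metric.isOpen_ball,
    ⟨x, Metric.mem_ball_self hr, rfl⟩, ?_⟩
  exact ((convex_ball x r).isConnected ⟨x, Metric.mem_ball_self hr⟩).image _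
    continuous_projS.continuousOn

/-- A circle map is topological null iff the maximal pattern complexity
of every open cover is of polynomial order. -/
theorem circle_null_iff_polyOrder (f : Circle1 → Circle1) (hf : Continuous f) :
    IsNull f ↔ ∀ U : Set (Set Circle1), IsOpenCover U → PolyOrder (patternComp f U) := by
  have : Fact ((0 : ℝ) < 1) := ⟨one_pos⟩
  exact ⟨fun h _ hU => h.polyOrder thickConnected_circle hf hU, IsNull.of_polyOrder⟩
end
end

section
/- Let f : 𝕊 → 𝕊 be a circle map with topological entropy h_top(f) = 0. Then |deg(f)| ≤ 1 and f is non-extensible. -/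
/-! Positive entropy is forced by a horseshoe. If two disjoint closed sets `A`, `B` are each
mapped onto the whole space by `f^[k]`, every `A`/`B` itinerary along the multiples of `k` is
realized, and distinct itineraries lie in distinct elements of the joins of the open cover
`{Aᶜ, Bᶜ}`; hence `h_top(f) ≥ log 2 / k` (`topEnt_ne_zero_of_horseshoe`).

On the circle it suffices that a lift `G` of some `f^[m]` varies by at least `1` on both
`[p, q]` and `[q, p + 1]` for some `p < q < p + 1` (`topEnt_ne_zero_of_lift`). Each of these two
arcs covers the circle. They share their endpoints, but under `f^[2m]` already a piece
`[p, s]` with `s < q` and a piece `[q, t]` with `t < p + 1` cover the circle, because a segment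
of length `1` contains a translate of one of the two arcs avoiding its far endpoint.

If `|d| ≥ 2`, a point of `[0, 1]` where `F` equals `F 0 + d / 2` gives such a configuration for
`F`. If `|d| ≤ 1` and `F^n [r, r + 1]` has length at least `|d| + 1`, the points `p < q` where the
extrema are attained give one for `F^n`, since `F^n (p + 1) = F^n p + d ^ n`
and `|d ^ n| = |d|`. -/

open Set Filter Topology ENNReal

noncomputable section

/-! ### Entropy of a two-set horseshoe -/

/-- If `g` maps each of `A`, `B` onto the whole space, every `A`/`B` itinerary is realized by
some orbit: pull points back along the word, starting from its last letter. -/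
lemma exists_itinerary {X : Type*} [Nonempty X] (g : X → X) (A B : Set X)
    (hA : ∀ c, ∃ x ∈ A, g x = c) (hB : ∀ c, ∃ x ∈ B, g x = c) (j : ℕ) :
    ∀ w : ℕ → Bool, ∃ x, ∀ i < j, g^[i] x ∈ if w i then A else B := by
  induction j with
  | zero => intro w; exact ⟨Classical.arbitrary X, by simp⟩
  | succ j ih =>
    intro w
    obtain ⟨y, hy⟩ := ih (fun i => w (i + 1))
    obtain ⟨x, hx, hxy⟩ : ∃ x ∈ (if w 0 then A else B), g x = y := by
      cases w 0
      · simpa using hB y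
      · simpa using hA y
    refine ⟨x, fun i hi => ?_⟩
    cases i with
    | zero => exact hx
    | succ i =>
      rw [Function.iterate_succ_apply, hxy]
      exact hy i (by omega)

/-- Each element of the join of `{Aᶜ, Bᶜ}` contains a point of at most one `A`/`B` itinerary
along the times `k, 2k, …, jk`, so a subcover has at least `2 ^ j` elements. -/
lemma two_pow_le_coverN_s3 {X : Type*} [Nonempty X] (f : X → X) (k : ℕ) (hk : 0 < k)
    (A B : Set X) (hAB : Disjoint A B)
    (hA : ∀ c, ∃ x ∈ A, f^[k] x = c) (hB : ∀ c, ∃ x ∈ B, f^[k] x = c) (j : ℕ) :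
    2 ^ j ≤ coverN (timeJoin f {Aᶜ, Bᶜ} (fun i : Fin (k * j) => (i : ℕ) + 1)) := by
  classical
  set J := timeJoin f {Aᶜ, Bᶜ} (fun i : Fin (k * j) => (i : ℕ) + 1) with hJ
  have hcov : ⋃₀ ({Aᶜ, Bᶜ} : Set (Set X)) = univ := by
    rw [sUnion_pair, ← compl_inter, hAB.inter_eq, compl_empty]
  have hJfin : J.Finite := by
    have : J = (fun u : Fin (k * j) → Set X => ⋂ i : Fin (k * j), f^[(i : ℕ) + 1] ⁻¹' u i) ''
        (Set.univ.pi fun _ => ({Aᶜ, Bᶜ} : Set (Set X))) := by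
      ext S
      constructor
      · rintro ⟨u, hu, rfl⟩
        exact ⟨u, fun i _ => hu i, rfl⟩
      · rintro ⟨u, hu, rfl⟩
        exact ⟨u, fun i => hu i (mem_univ i), rfl⟩
    rw [this]
    exact (Set.Finite.pi fun _ => Set.toFinite _).image _
  have hJcov : ⋃₀ J = univ := by
    refine eq_univ_of_forall fun x => ?_
    have h : ∀ y : X, ∃ S ∈ ({Aᶜ, Bᶜ} : Set (Set X)), y ∈ S := fun y => by
      have : y ∈ ⋃₀ ({Aᶜ, Bᶜ} : Set (Set X)) := hcov ▸ mem_univ y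
      exact this
    choose S hS hyS using h
    refine ⟨_, ⟨fun i => S (f^[(i : ℕ) + 1] x), fun i => hS _, rfl⟩, ?_⟩
    exact mem_iInter.2 fun i => hyS _
  refine le_csInf ⟨_, hJfin.toFinset, by simp, by simpa using hJcov, rfl⟩ ?_
  rintro n ⟨V, hVJ, hV, rfl⟩
  -- The point realizing `w` is an `f^[k]`-preimage, so that its itinerary starts at time `k`.
  have hx : ∀ w : Fin j → Bool, ∃ x, ∀ i : Fin j,
      f^[k * (i + 1)] x ∈ if w i then A else B := by
    intro w
    obtain ⟨y, hy⟩ := exists_itinerary (f^[k]) A B hA hB j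
      (fun i => if h : i < j then w ⟨i, h⟩ else true)
    obtain ⟨x, -, hxy⟩ := hA y
    refine ⟨x, fun i => ?_⟩
    have := hy i i.2
    rw [Function.iterate_mul, Function.iterate_succ_apply, hxy]
    simpa using this
  choose x hx using hx
  have hφ : ∀ w, ∃ S ∈ V, x w ∈ S := fun w => by
    have : x w ∈ ⋃₀ (V : Set (Set X)) := hV ▸ mem_univ _
    simpa using this
  choose φ hφV hφx using hφ
  have hinj : Function.Injective φ := by
    intro w w' h
    ext i
    obtain ⟨u, hu, hS⟩ := hVJ (hφV w)
    have h1 : x w ∈ ⋂ i : Fin (k * j), f^[(i : ℕ) + 1] ⁻¹' u i := hS ▸ hφx w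
    have h2 : x w' ∈ ⋂ i : Fin (k * j), f^[(i : ℕ) + 1] ⁻¹' u i := hS ▸ h ▸ hφx w'
    have hpos : 0 < k * (i + 1) := by positivity
    have hle : k * ((i : ℕ) + 1) ≤ k * j := Nat.mul_le_mul_left k i.2
    let a : Fin (k * j) := ⟨k * (i + 1) - 1, by omega⟩
    have ha : (a : ℕ) + 1 = k * (i + 1) := by simp only [a]; omega
    have h1 := mem_iInter.1 h1 a
    have h2 := mem_iInter.1 h2 a
    simp only [ha, mem_preimage] at h1 h2
    have e1 := hx w i
    have e2 := hx w' i
    rcases hu a with h | h <;> rw [h] at h1 h2 <;>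
      cases hw : w i <;> cases hw' : w' i <;> simp_all
  calc 2 ^ j = Fintype.card (Fin j → Bool) := by simp
    _ = (Finset.univ.image φ).card := by
        rw [Finset.card_image_of_injective _ hinj, Finset.card_univ]
    _ ≤ V.card := Finset.card_le_card fun S hS => by
        obtain ⟨w, -, rfl⟩ := Finset.mem_image.1 hS
        exact hφV w

/-- Two disjoint closed sets that an iterate `f^[k]` maps onto the whole space force
positive entropy: the cover `{Aᶜ, Bᶜ}` alone contributes at least `log 2 / k`. -/
lemma topEnt_ne_zero_of_horseshoe {X : Type*} [TopologicalSpace X] [Nonempty X] (f : X → X)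
    (k : ℕ) (hk : 0 < k) (A B : Set X) (hAc : IsClosed A) (hBc : IsClosed B)
    (hAB : Disjoint A B)
    (hA : ∀ c, ∃ x ∈ A, f^[k] x = c) (hB : ∀ c, ∃ x ∈ B, f^[k] x = c) : topEnt f ≠ 0 := by
  intro h0
  have hU : IsOpenCover ({Aᶜ, Bᶜ} : Set (Set X)) := by
    constructor
    · rintro S (rfl | rfl)
      · exact hAc.isOpen_compl
      · exact hBc.isOpen_compl
    · rw [sUnion_pair, ← compl_inter, hAB.inter_eq, compl_empty]
  have h1 : coverEnt f {Aᶜ, Bᶜ} ≤ 0 := by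
    rw [← h0]
    exact le_iSup₂ (f := fun (U : Set (Set X)) (_ : U ∈ {U | IsOpenCover U}) => coverEnt f U)
      _ hU
  have h2 : ENNReal.ofReal (Real.log 2 / k) ≤ coverEnt f {Aᶜ, Bᶜ} := by
    apply Filter.le_limsup_of_frequently_le (hu_le := by isBoundedDefault)
    · rw [Filter.frequently_atTop]
      intro a
      refine ⟨k * (a + 1), by nlinarith, ENNReal.ofReal_le_ofReal ?_⟩
      have h := two_pow_le_coverN_s3 f k hk A B hAB hA hB (a + 1)
      have hlog : ((a + 1 : ℕ) : ℝ) * Real.log 2 ≤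
          Real.log (coverN (timeJoin f {Aᶜ, Bᶜ} fun i : Fin (k * (a + 1)) => (i : ℕ) + 1)) := by
        rw [← Real.log_pow]
        exact Real.log_le_log (by positivity) (by exact_mod_cast h)
      have hk' : (0 : ℝ) < k := by exact_mod_cast hk
      rw [div_le_div_iff₀ hk' (by positivity)]
      push_cast at hlog ⊢
      nlinarith
  have h3 : 0 < Real.log 2 / k := div_pos (Real.log_pos (by norm_num)) (by exact_mod_cast hk)
  exact absurd (h2.trans h1) (by simpa using h3)

/-! ### Horseshoes from lifts -/

lemma projS_eq_iff {x y : ℝ} : projS x = projS y ↔ ∃ k : ℤ, y = x + k := by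
  unfold projS
  rw [eq_comm, ← sub_eq_zero, ← AddCircle.coe_sub, AddCircle.coe_eq_zero_iff]
  constructor
  · rintro ⟨k, hk⟩
    exact ⟨k, by simp at hk; linarith⟩
  · rintro ⟨k, hk⟩
    exact ⟨k, by simp; linarith⟩

lemma projS_add_int (x : ℝ) (k : ℤ) : projS (x + k) = projS x :=
  (projS_eq_iff.2 ⟨k, rfl⟩).symm

lemma exists_int_add_mem_Ico (a x : ℝ) : ∃ k : ℤ, a + k ≤ x ∧ x < a + k + 1 :=
  ⟨⌊x - a⌋, by linarith [Int.floor_le (x - a)], by linarith [Int.lt_floor_add_one (x - a)]⟩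

lemma exists_int_add_mem_Ioc (a x : ℝ) : ∃ k : ℤ, a + k < x ∧ x ≤ a + k + 1 :=
  ⟨⌈x - a⌉ - 1, by push_cast; linarith [Int.ceil_lt_add_one (x - a)],
    by push_cast; linarith [Int.le_ceil (x - a)]⟩

/-- An interval on which `G` varies by at least `1` is mapped by `projS ∘ G` onto the circle. -/
lemma projS_surj_of_one_le {G : ℝ → ℝ} (hG : Continuous G) {a b : ℝ} (hab : a ≤ b)
    (h : 1 ≤ |G b - G a|) (c : Circle1) : ∃ t ∈ Icc a b, projS (G t) = c := by
  obtain ⟨c, rfl⟩ := QuotientAddGroup.mk_surjective c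
  obtain ⟨k, h1, h2⟩ := exists_int_add_mem_Ico (min (G a) (G b)) c
  have hmem : c - k ∈ uIcc (G a) (G b) := by
    have : max (G a) (G b) - min (G a) (G b) = |G b - G a| := max_sub_min_eq_abs _ _
    exact ⟨by linarith, by linarith⟩
  obtain ⟨t, ht, hGt⟩ := intermediate_value_uIcc (hG.continuousOn) hmem
  refine ⟨t, by rwa [uIcc_of_le hab] at ht, ?_⟩
  rw [hGt]
  exact projS_eq_iff.2 ⟨k, by ring⟩

/-- A segment of length at least `1` issuing from `y` contains a translate of `[p, q]` or of
`[q, p + 1]` that stays away from its other endpoint `z`. Hence a segment from `y` stopping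
short of `z` is already mapped onto the circle. -/
lemma exists_short_surj {g : Circle1 → Circle1} {G : ℝ → ℝ} (hG : Continuous G)
    (hg : ∀ x, projS (G x) = g (projS x)) {p q : ℝ} (hpq : p < q) (hq : q < p + 1)
    (h1 : 1 ≤ |G q - G p|) (h2 : 1 ≤ |G (p + 1) - G q|) {y z : ℝ} (hyz : 1 ≤ |z - y|) :
    ∃ y' ∈ uIcc y z, y' ≠ z ∧ ∀ c, ∃ t ∈ uIcc y y', projS (G t) = c := by
  have hK : ∀ (k : ℤ) (c : Circle1), ∃ t ∈ Icc (p + k) (q + k), projS (G t) = c := by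
    intro k c
    obtain ⟨t, ht, hc⟩ := projS_surj_of_one_le hG hpq.le h1 c
    refine ⟨t + k, ⟨by linarith [ht.1], by linarith [ht.2]⟩, ?_⟩
    rw [hg, projS_add_int, ← hg, hc]
  have hL : ∀ (k : ℤ) (c : Circle1), ∃ t ∈ Icc (q + k) (p + k + 1), projS (G t) = c := by
    intro k c
    obtain ⟨t, ht, hc⟩ := projS_surj_of_one_le hG hq.le h2 c
    refine ⟨t + k, ⟨by linarith [ht.1], by linarith [ht.2]⟩, ?_⟩
    rw [hg, projS_add_int, ← hg, hc]
  rcases le_abs.1 hyz with h | h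
  · have key : ∃ u v, y ≤ u ∧ u ≤ v ∧ v < y + 1 ∧
        ∀ c, ∃ t ∈ Icc u v, projS (G t) = c := by
      obtain ⟨k, ha, hb⟩ := exists_int_add_mem_Ioc p y
      rcases le_or_gt y (q + k) with hy | hy
      · exact ⟨_, _, hy, by linarith, by linarith, hL k⟩
      · refine ⟨_, _, ?_, ?_, ?_, hK (k + 1)⟩ <;> push_cast <;> linarith
    obtain ⟨u, v, hu, huv, hv, hs⟩ := key
    refine ⟨v, by rw [uIcc_of_le (by linarith)]; exact ⟨by linarith, by linarith⟩,
      by linarith, fun c => ?_⟩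
    obtain ⟨t, ht, hc⟩ := hs c
    exact ⟨t, by rw [uIcc_of_le (by linarith)]; exact ⟨by linarith [ht.1], ht.2⟩, hc⟩
  · have key : ∃ u v, y - 1 < u ∧ u ≤ v ∧ v ≤ y ∧
        ∀ c, ∃ t ∈ Icc u v, projS (G t) = c := by
      obtain ⟨k, ha, hb⟩ := exists_int_add_mem_Ico p y
      rcases le_or_gt (q + k) y with hy | hy
      · exact ⟨_, _, by linarith, by linarith, hy, hK k⟩
      · refine ⟨_, _, ?_, ?_, ?_, hL (k - 1)⟩ <;> push_cast <;> linarith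
    obtain ⟨u, v, hu, huv, hv, hs⟩ := key
    refine ⟨u, by rw [uIcc_of_ge (by linarith)]; exact ⟨by linarith, by linarith⟩,
      by linarith, fun c => ?_⟩
    obtain ⟨t, ht, hc⟩ := hs c
    exact ⟨t, by rw [uIcc_of_ge (by linarith)]; exact ⟨ht.1, by linarith [ht.2]⟩, hc⟩

/-- If `G` varies by at least `1` on `[a, b]`, then `G ∘ G` already maps some `[a, s]` with
`s < b` onto the circle. -/
lemma exists_initial_surj {g : Circle1 → Circle1} {G : ℝ → ℝ} (hG : Continuous G)
    (hg : ∀ x, projS (G x) = g (projS x)) {p q : ℝ} (hpq : p < q) (hq : q < p + 1)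
    (h1 : 1 ≤ |G q - G p|) (h2 : 1 ≤ |G (p + 1) - G q|) {a b : ℝ} (hab : a ≤ b)
    (h : 1 ≤ |G b - G a|) :
    ∃ s < b, ∀ c, ∃ x ∈ Icc a s, g (g (projS x)) = c := by
  obtain ⟨y', hy', hne, hs⟩ := exists_short_surj hG hg hpq hq h1 h2 h
  obtain ⟨s, hsmem, rfl⟩ := intermediate_value_uIcc hG.continuousOn hy'
  rw [uIcc_of_le hab] at hsmem
  refine ⟨s, lt_of_le_of_ne hsmem.2 fun e => hne (by rw [e]), fun c => ?_⟩
  obtain ⟨t, ht, hc⟩ := hs c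
  obtain ⟨x, hx, rfl⟩ := intermediate_value_uIcc hG.continuousOn ht
  rw [uIcc_of_le hsmem.1] at hx
  exact ⟨x, hx, by rw [← hg, ← hg, hc]⟩

/-- If a lift `G` of `f^[m]` varies by at least `1` on each of the complementary intervals
`[p, q]` and `[q, p + 1]`, then `f` has positive entropy. The two arcs share endpoints;
passing to `f^[2m]` leaves room to shrink both of them at the right end and make them
disjoint. -/
lemma topEnt_ne_zero_of_lift {f : Circle1 → Circle1} {m : ℕ} (hm : 0 < m) {G : ℝ → ℝ}
    (hG : Continuous G) (hg : ∀ x, projS (G x) = f^[m] (projS x)) {p q : ℝ} (hpq : p < q)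
    (hq : q < p + 1) (h1 : 1 ≤ |G q - G p|) (h2 : 1 ≤ |G (p + 1) - G q|) : topEnt f ≠ 0 := by
  obtain ⟨s, hs, hA⟩ := exists_initial_surj hG hg hpq hq h1 h2 hpq.le h1
  obtain ⟨t, ht, hB⟩ := exists_initial_surj hG hg hpq hq h1 h2 hq.le h2
  have hcont : Continuous projS := AddCircle.continuous_mk' 1
  have hiter : ∀ x, f^[m + m] x = f^[m] (f^[m] x) := Function.iterate_add_apply f m m
  refine topEnt_ne_zero_of_horseshoe f (m + m) (by omega) (projS '' Icc p s)
    (projS '' Icc q t) (isCompact_Icc.image hcont).isClosed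
    (isCompact_Icc.image hcont).isClosed ?_ ?_ ?_
  · rw [Set.disjoint_left]
    rintro _ ⟨x, hx, rfl⟩ ⟨x', hx', h⟩
    obtain ⟨k, hk⟩ := projS_eq_iff.1 h.symm
    have k1 : (0 : ℝ) < k := by linarith [hx.2, hx'.1]
    have k2 : (k : ℝ) < 1 := by linarith [hx.1, hx'.2]
    norm_cast at k1 k2
    omega
  · intro c
    obtain ⟨x, hx, hc⟩ := hA c
    exact ⟨_, mem_image_of_mem _ hx, by rw [hiter, hc]⟩
  · intro c
    obtain ⟨x, hx, hc⟩ := hB c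
    exact ⟨_, mem_image_of_mem _ hx, by rw [hiter, hc]⟩

/-! ### Degree of a lift -/

lemma eq_of_continuous_int_valued {h : ℝ → ℝ} (hc : Continuous h) (hi : ∀ x, ∃ k : ℤ, h x = k)
    (a b : ℝ) : h a = h b := by
  have aux : ∀ a b, ¬ h a < h b := by
    intro a b hab
    obtain ⟨k, hk⟩ := hi a
    obtain ⟨l, hl⟩ := hi b
    have hkl : (k : ℝ) + 1 ≤ l := by
      rw [hk, hl] at hab
      exact_mod_cast hab
    obtain ⟨x, hx⟩ := mem_range_of_exists_le_of_exists_ge hc (c := (k : ℝ) + 1 / 2)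
      ⟨a, by linarith⟩ ⟨b, by linarith⟩
    obtain ⟨n, hn⟩ := hi x
    have n1 : (k : ℝ) < n := by linarith
    have n2 : (n : ℝ) < k + 1 := by linarith
    norm_cast at n1 n2
    omega
  exact le_antisymm (not_lt.1 (aux b a)) (not_lt.1 (aux a b))

lemma IsLift.exists_degree {f : Circle1 → Circle1} {F : ℝ → ℝ} (hF : IsLift f F) :
    ∃ d : ℤ, ∀ x, F (x + 1) = F x + d := by
  have hi : ∀ x, ∃ k : ℤ, F (x + 1) - F x = k := by
    intro x
    have : projS (F x) = projS (F (x + 1)) := by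
      rw [hF.2, hF.2]
      congr 1
      exact projS_eq_iff.2 ⟨1, by simp⟩
    obtain ⟨k, hk⟩ := projS_eq_iff.1 this
    exact ⟨k, by linarith⟩
  obtain ⟨d, hd⟩ := hi 0
  refine ⟨d, fun x => ?_⟩
  have hFc := hF.1
  have := eq_of_continuous_int_valued (h := fun x => F (x + 1) - F x) (by fun_prop) hi x 0
  linarith

/-- All lifts of a map differ by integer constants, hence share their degree. -/
lemma IsLift.degree_transfer {f : Circle1 → Circle1} {F F' : ℝ → ℝ} (hF : IsLift f F)
    (hF' : IsLift f F') {d : ℤ} (hd : ∀ x, F (x + 1) = F x + d) (x : ℝ) :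
    F' (x + 1) = F' x + d := by
  have hFc := hF.1
  have hFc' := hF'.1
  have := eq_of_continuous_int_valued (h := fun x => F' x - F x) (by fun_prop)
    (fun x => by
      obtain ⟨k, hk⟩ := projS_eq_iff.1 ((hF.2 x).trans (hF'.2 x).symm)
      exact ⟨k, by linarith⟩) (x + 1) x
  linarith [hd x]

lemma IsLift.iterate {f : Circle1 → Circle1} {F : ℝ → ℝ} (hF : IsLift f F) (n : ℕ) :
    IsLift f^[n] F^[n] := by
  refine ⟨hF.1.iterate n, fun x => ?_⟩
  exact (Function.Semiconj.iterate_right (f := projS) hF.2 n x)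

lemma iterate_degree {F : ℝ → ℝ} {d : ℤ} (hd : ∀ x, F (x + 1) = F x + d) (n : ℕ) (x : ℝ) :
    F^[n] (x + 1) = F^[n] x + (d : ℝ) ^ n := by
  have hnat : ∀ (k : ℕ) (x : ℝ), F (x + k) = F x + k * d := by
    intro k
    induction k with
    | zero => simp
    | succ k ih => intro x; push_cast; rw [← add_assoc, hd, ih]; ring
  have hint : ∀ (k : ℤ) (x : ℝ), F (x + k) = F x + k * d := by
    intro k x
    obtain ⟨n, rfl | rfl⟩ := k.eq_nat_or_neg
    · exact_mod_cast hnat n x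
    · have := hnat n (x + ((-(n : ℤ) : ℤ) : ℝ))
      push_cast at this ⊢
      rw [neg_add_cancel_right] at this
      linarith
  induction n with
  | zero => simp
  | succ n ih =>
    rw [Function.iterate_succ_apply', Function.iterate_succ_apply', ih]
    have := hint (d ^ n) (F^[n] x)
    push_cast at this
    rw [this, pow_succ]

lemma abs_degree_le_one {f : Circle1 → Circle1} (h0 : topEnt f = 0) {F : ℝ → ℝ}
    (hF : IsLift f F) {d : ℤ} (hd : ∀ x, F (x + 1) = F x + d) : |d| ≤ 1 := by
  by_contra! hlt
  have h01 := hd 0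
  rw [zero_add] at h01
  -- `q` is a point of `[0, 1]` at which `F` takes the midpoint value `F 0 + d / 2`.
  have hmid : F 0 + d / 2 ∈ uIcc (F 0) (F 1) := by
    rw [h01, mem_uIcc]
    rcases le_total (0 : ℝ) d with h | h
    · left; constructor <;> linarith
    · right; constructor <;> linarith
  obtain ⟨q, hq, hFq⟩ := intermediate_value_uIcc hF.1.continuousOn hmid
  rw [uIcc_of_le zero_le_one] at hq
  have hd2 : (2 : ℝ) ≤ |(d : ℝ)| := by exact_mod_cast hlt
  have habs : (1 : ℝ) ≤ |(d : ℝ) / 2| := by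
    rw [abs_div, abs_two]; linarith
  have hd0 : (d : ℝ) ≠ 0 := by
    intro h; rw [h] at hd2; norm_num at hd2
  have hq0 : q ≠ 0 := by
    rintro rfl; exact hd0 (by linarith)
  have hq1 : q ≠ 1 := by
    rintro rfl; exact hd0 (by linarith)
  refine topEnt_ne_zero_of_lift (m := 1) one_pos hF.1 (by simpa using hF.2) (p := 0) (q := q)
    (lt_of_le_of_ne hq.1 hq0.symm) (by rw [zero_add]; exact lt_of_le_of_ne hq.2 hq1) ?_ ?_ h0
  · rwa [hFq, add_sub_cancel_left]
  · rwa [zero_add, h01, hFq, show F 0 + d - (F 0 + d / 2) = (d : ℝ) / 2 by ring]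

/-- A zero entropy map of degree in `{-1, 0, 1}` has no iterate whose lift spreads a unit
interval over length `|d| + 1`: the variation of that lift on the complement of the interval
between the extremal points would be at least `|d| + 1 - |d ^ n| = 1`. -/
lemma nonextensible {f : Circle1 → Circle1} (h0 : topEnt f = 0) {F : ℝ → ℝ}
    (hF : IsLift f F) {d : ℤ} (hd : ∀ x, F (x + 1) = F x + d) (hd1 : |d| ≤ 1) (r : ℝ)
    {n : ℕ} (hn : 1 ≤ n) :
    sSup (F^[n] '' Icc r (r + 1)) - sInf (F^[n] '' Icc r (r + 1)) < |(d : ℝ)| + 1 := by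
  have hG := hF.iterate n
  have hdeg := iterate_degree hd n
  set G := F^[n]
  have hpow : |(d : ℝ) ^ n| = |(d : ℝ)| := by
    obtain ⟨h1, h2⟩ := abs_le.1 hd1
    obtain rfl | rfl | rfl : d = -1 ∨ d = 0 ∨ d = 1 := by omega
    · simp [abs_pow]
    · simp [show n ≠ 0 by omega]
    · simp
  have main : ∀ p ∈ Icc r (r + 1), ∀ q ∈ Icc r (r + 1), p ≤ q →
      |G q - G p| < |(d : ℝ)| + 1 := by
    intro p hp q hq hpq
    by_contra! h
    have hd0 := abs_nonneg (d : ℝ)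
    have h1 : 1 ≤ |G q - G p| := by linarith
    have h2 : 1 ≤ |G (p + 1) - G q| := by
      rw [hdeg]
      have h3 : G q - G p = (d : ℝ) ^ n - (G p + (d : ℝ) ^ n - G q) := by ring
      have h4 := abs_sub ((d : ℝ) ^ n) (G p + (d : ℝ) ^ n - G q)
      rw [← h3, hpow] at h4
      linarith
    have hpq' : p ≠ q := by
      rintro rfl; norm_num at h1
    have hq' : q ≠ p + 1 := by
      rintro rfl; norm_num at h2
    exact topEnt_ne_zero_of_lift hn hG.1 hG.2 (lt_of_le_of_ne hpq hpq')
      (lt_of_le_of_ne (by linarith [hq.2, hp.1]) hq') h1 h2 h0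
  have hne : (Icc r (r + 1)).Nonempty := nonempty_Icc.2 (by linarith)
  obtain ⟨a, ha, hsup⟩ := isCompact_Icc.exists_sSup_image_eq hne hG.1.continuousOn
  obtain ⟨b, hb, hinf⟩ := isCompact_Icc.exists_sInf_image_eq hne hG.1.continuousOn
  rw [hsup, hinf]
  rcases le_total a b with h | h
  · have := main a ha b hb h
    rw [abs_sub_comm] at this
    exact (le_abs_self _).trans_lt this
  · exact (le_abs_self _).trans_lt (main b hb a ha h)

/-- A circle map with zero topological entropy has `|deg f| ≤ 1` and is
non-extensible. -/
theorem circle_zero_entropy_deg_le_one_nonextensible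
    (f : Circle1 → Circle1) (hf : Continuous f) (h0 : topEnt f = 0) :
    ∃ d : ℤ, |d| ≤ 1 ∧ ∀ F : ℝ → ℝ, IsLift f F →
      (∀ x : ℝ, F (x + 1) = F x + d) ∧
      ∀ r : ℝ, ∀ n : ℕ, 1 ≤ n →
        sSup (F^[n] '' Icc r (r + 1)) - sInf (F^[n] '' Icc r (r + 1)) <
          |(d : ℝ)| + 1 := by
  -- The conclusion only concerns lifts, so their existence is not needed.
  by_cases hex : ∃ F, IsLift f F
  · obtain ⟨F, hF⟩ := hex
    obtain ⟨d, hd⟩ := hF.exists_degree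
    have hd1 := abs_degree_le_one h0 hF hd
    refine ⟨d, hd1, fun F' hF' => ?_⟩
    have hd' := hF.degree_transfer hF' hd
    exact ⟨hd', fun r n hn => nonextensible h0 hF' hd' hd1 r hn⟩
  · exact ⟨0, by simp, fun F hF => absurd ⟨F, hF⟩ hex⟩

end
end
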